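/- Let x ∈ L_+ be nonzero with normal form x = a_1 e_1 + ⋯ + a_n e_n + a c, and assume gcd(p_i, a_i) = 1 for all 1 ≤ i ≤ n. Set R := S^x, ω := (n−2)c − (e_1 + ⋯ + e_n) ∈ L, and let y ∈ L. Then the (maximal Cohen–Macaulay) R-module S(y)^x satisfies Ext^1_R(S(y)^x, R) = 0 (i.e., is a special CM R-module) if and only if for every ℓ ∈ ℤ the equality S_{y+ω+ℓx} = ∑_{m∈ℤ} S_{ω+mx} · S_{y+(ℓ−m)x} holds as ℂ-subspaces of S (the right-hand side, a sum of products of homogeneous components, is always contained in the left-hand side; it is nonzero only for finitely many m). -/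

import Mathlib

set_option synthInstance.maxHeartbeats 1000000
set_option maxHeartbeats 1000000
noncomputable section

open MvPolynomial

def LRel (ι : Type) [DecidableEq ι] (p : ι → ℕ) : AddSubgroup (Option ι → ℤ) :=
  AddSubgroup.closure
    { v | ∃ i : ι, v = (p i : ℤ) • Pi.single (some i) 1 - Pi.single (none : Option ι) 1 }

abbrev LGroup (ι : Type) [DecidableEq ι] (p : ι → ℕ) : Type :=
  (Option ι → ℤ) ⧸ LRel ι p

def egen {ι : Type} [DecidableEq ι] (p : ι → ℕ) (i : ι) : LGroup ι p :=
  QuotientAddGroup.mk (Pi.single (some i) 1)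

def cgen {ι : Type} [DecidableEq ι] (p : ι → ℕ) : LGroup ι p :=
  QuotientAddGroup.mk (Pi.single (none : Option ι) 1)

def Lplus {ι : Type} [DecidableEq ι] (p : ι → ℕ) : AddSubmonoid (LGroup ι p) :=
  AddSubmonoid.closure (Set.range (egen p))

abbrev SPoly (ι : Type) : Type := MvPolynomial (ι ⊕ Fin 2) ℂ

def SIdl (ι : Type) (p : ι → ℕ) (c0 c1 : ι → ℂ) : Ideal (SPoly ι) :=
  Ideal.span { f | ∃ i : ι,
    f = X (Sum.inl i) ^ (p i) - (C (c0 i) * X (Sum.inr 0) + C (c1 i) * X (Sum.inr 1)) }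

abbrev SAlg (ι : Type) (p : ι → ℕ) (c0 c1 : ι → ℂ) : Type := SPoly ι ⧸ SIdl ι p c0 c1

def wtA {ι : Type} [Fintype ι] [DecidableEq ι] (p : ι → ℕ) (m : (ι ⊕ Fin 2) →₀ ℕ) :
    LGroup ι p :=
  (∑ i : ι, m (Sum.inl i) • egen p i) + (m (Sum.inr 0) + m (Sum.inr 1)) • cgen p

def polyCompA {ι : Type} [Fintype ι] [DecidableEq ι] (p : ι → ℕ) (y : LGroup ι p) :
    Submodule ℂ (SPoly ι) where
  carrier := { f | ∀ m, coeff m f ≠ 0 → wtA p m = y }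
  add_mem' := by
    intro f g hf hg m hm
    by_cases h : coeff m f = 0
    · refine hg m fun h' => hm ?_
      simp [coeff_add, h, h']
    · exact hf m h
  zero_mem' := by
    intro m hm
    simp at hm
  smul_mem' := by
    intro c f hf m hm
    refine hf m fun h => hm ?_
    simp [coeff_smul, h]

def SCompA {ι : Type} [Fintype ι] [DecidableEq ι] (p : ι → ℕ) (c0 c1 : ι → ℂ)
    (y : LGroup ι p) : Submodule ℂ (SAlg ι p c0 c1) :=
  (polyCompA p y).map (Ideal.Quotient.mkₐ ℂ (SIdl ι p c0 c1)).toLinearMap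

def SVerA {ι : Type} [Fintype ι] [DecidableEq ι] (p : ι → ℕ) (c0 c1 : ι → ℂ)
    (x : LGroup ι p) : Submodule ℂ (SAlg ι p c0 c1) :=
  ⨆ k : ℤ, SCompA p c0 c1 (k • x)

def SShiftA {ι : Type} [Fintype ι] [DecidableEq ι] (p : ι → ℕ) (c0 c1 : ι → ℂ)
    (y x : LGroup ι p) : Submodule ℂ (SAlg ι p c0 c1) :=
  ⨆ k : ℤ, SCompA p c0 c1 (y + k • x)

/-!
Grade `S` by the quotient `Q = L / ℤx`, a torsion group because `x` has infinite order. The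
component of degree `0` is `R = S^x`, and the component of degree `y` is `S(y)^x`. Over the
polynomial ring `A = ℂ[t_0^K, t_1^K]`, where `K c = 0` in `Q` and hence `A ⊆ R`, the ring `S` is
free on monomials, and the coefficient of the top monomial is a form on `S` which is a perfect
pairing when composed with multiplication. The top monomial has degree `ω` in `Q`, so
`Hom_A(S(ω)^x, A)` is free of rank one over `R`: the module `S(ω)^x` is canonical.

If a prime of `S` does not contain `t_j`, then it omits a homogeneous element of every degree in
`Q`: it contains at most one `x_i`, and the degree `e_i` is recovered from the others by
`gcd(p_i, a_i) = 1` and `x = 0` in `Q`. Hence `t_0^K` and `t_1^K` lie in `S(ω)^x · S(-ω)^x` for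
suitable `K`, and the kernel and cokernel of the multiplication `S(y)^x ⊗_R S(ω)^x → S(y+ω)^x` are
killed by the regular sequence `t_0^K, t_1^K` of `A`.

Let `F → S(y)^x` be a free cover with kernel `N`. Then `Ext¹_R(S(y)^x, R) = 0` means that maps
`N → R` extend to `F`. By duality this is the extension of `A`-linear forms from `N ⊗_R S(ω)^x` to
`F ⊗_R S(ω)^x` and, as `A` has depth two, from the kernel of `F ⊗_R S(ω)^x → S(y+ω)^x`. A map
between projective `A`-modules with cokernel killed by `t_0^K, t_1^K` has this extension property
exactly when it is surjective. So the condition is `S(y)^x · S(ω)^x = S(y+ω)^x`, which is compared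
in each `L`-degree.
-/

section ExtCriterion

open CategoryTheory

universe u

variable {R : Type u} [CommRing R]

/-- The submodule `K` of `F` has the extension property for `Y` if every linear map `K → Y`
extends to `F`. For `F` projective this says `Ext¹(F ⧸ K, Y) = 0`. -/
def HasExtensionProperty {F : Type*} [AddCommGroup F] [Module R F]
    (K : Submodule R F) (Y : Type*) [AddCommGroup Y] [Module R Y] : Prop :=
  ∀ h : K →ₗ[R] Y, ∃ H : F →ₗ[R] Y, ∀ k : K, H k = h k

lemma HasExtensionProperty.of_ker_surjective {M Y P F : Type*}
    [AddCommGroup M] [Module R M] [AddCommGroup Y] [Module R Y]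
    [AddCommGroup P] [Module R P] [AddCommGroup F] [Module R F]
    [Module.Projective R P] [Module.Projective R F]
    {e : P →ₗ[R] M} (he : Function.Surjective e) {q : F →ₗ[R] M} (hq : Function.Surjective q)
    (hext : HasExtensionProperty e.ker Y) : HasExtensionProperty q.ker Y := by
  intro h
  obtain ⟨a, ha⟩ := Module.projective_lifting_property e q he
  obtain ⟨b, hb⟩ := Module.projective_lifting_property q e hq
  have e_a (z : F) : e (a z) = q z := LinearMap.congr_fun ha z
  have q_b (z : P) : q (b z) = e z := LinearMap.congr_fun hb z
  let bKer : e.ker →ₗ[R] q.ker := b.restrict fun z hz => by simpa [q_b] using hz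
  let d : F →ₗ[R] q.ker := (LinearMap.id - b ∘ₗ a).codRestrict _ fun z => by simp [q_b, e_a]
  obtain ⟨H, hH⟩ := hext (h ∘ₗ bKer)
  refine ⟨H ∘ₗ a + h ∘ₗ d, fun k => ?_⟩
  have hHa : H (a k) = h (bKer ⟨a k, by simp [e_a]⟩) := hH ⟨a k, by simp [e_a]⟩
  rw [LinearMap.add_apply, LinearMap.comp_apply, LinearMap.comp_apply, hHa, ← map_add]
  congr 1
  ext
  simp [bKer, d]

lemma subsingleton_ext_one_iff_of_resolution {X : ModuleCat.{u} R} (P : ProjectiveResolution X)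
    (Y : ModuleCat.{u} R) :
    Subsingleton (((Ext R (ModuleCat.{u} R) 1).obj (Opposite.op X)).obj Y) ↔
      ∀ f : P.complex.X 1 ⟶ Y, P.complex.d 2 1 ≫ f = 0 →
        ∃ g : P.complex.X 0 ⟶ Y, P.complex.d 1 0 ≫ g = f := by
  rw [← ModuleCat.isZero_iff_subsingleton, (P.isoExt 1 Y).isZero_iff,
    ← HomologicalComplex.exactAt_iff_isZero_homology,
    HomologicalComplex.exactAt_iff' _ 0 1 2 (by simp) (by simp),
    ShortComplex.moduleCat_exact_iff]
  rfl

lemma hasExtensionProperty_ker_iff_of_exact {P₂ P₁ P₀ M Y : Type*}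
    [AddCommGroup P₂] [Module R P₂] [AddCommGroup P₁] [Module R P₁]
    [AddCommGroup P₀] [Module R P₀] [AddCommGroup M] [Module R M] [AddCommGroup Y] [Module R Y]
    {d₂ : P₂ →ₗ[R] P₁} {d₁ : P₁ →ₗ[R] P₀} {e : P₀ →ₗ[R] M}
    (h₁ : Function.Exact d₂ d₁) (h₀ : Function.Exact d₁ e) :
    HasExtensionProperty e.ker Y ↔
      ∀ f : P₁ →ₗ[R] Y, f ∘ₗ d₂ = 0 → ∃ g : P₀ →ₗ[R] Y, g ∘ₗ d₁ = f := by
  let π : P₁ →ₗ[R] e.ker := d₁.codRestrict _ fun z => (h₀ _).2 ⟨z, rfl⟩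
  have π_surj : Function.Surjective π := fun k =>
    ((h₀ k).1 k.2).imp fun z hz => Subtype.ext hz
  have π_ker : π.ker = d₂.range := by
    rw [← h₁.linearMap_ker_eq]; exact LinearMap.ker_codRestrict _ _ _
  constructor
  · intro hext f hf
    have hker : π.ker ≤ f.ker := by rw [π_ker]; exact LinearMap.range_le_ker_iff.2 hf
    obtain ⟨h, rfl⟩ : ∃ h : e.ker →ₗ[R] Y, h ∘ₗ π = f :=
      ⟨π.ker.liftQ f hker ∘ₗ (π.quotKerEquivOfSurjective π_surj).symm, by
        ext z
        have : (π.quotKerEquivOfSurjective π_surj).symm (π z) = Submodule.Quotient.mk z := by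
          rw [LinearEquiv.symm_apply_eq]; rfl
        simp [this]⟩
    obtain ⟨H, hH⟩ := hext h
    exact ⟨H, LinearMap.ext fun z => hH (π z)⟩
  · intro hlift h
    obtain ⟨g, hg⟩ := hlift (h ∘ₗ π) (by
      rw [LinearMap.comp_assoc, LinearMap.range_le_ker_iff.1 π_ker.ge, LinearMap.comp_zero])
    refine ⟨g, fun k => ?_⟩
    obtain ⟨w, rfl⟩ := π_surj k
    exact LinearMap.congr_fun hg w

theorem subsingleton_ext_one_iff {M Y F : Type u} [AddCommGroup M] [Module R M]
    [AddCommGroup Y] [Module R Y] [AddCommGroup F] [Module R F] [Module.Projective R F]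
    {q : F →ₗ[R] M} (hq : Function.Surjective q) :
    Subsingleton (((Ext R (ModuleCat.{u} R) 1).obj (Opposite.op (ModuleCat.of R M))).obj
      (ModuleCat.of R Y)) ↔ HasExtensionProperty q.ker Y := by
  let P : ProjectiveResolution (ModuleCat.of R M) := ProjectiveResolution.of _
  let e : P.complex.X 0 →ₗ[R] M := (P.π.f 0).hom
  have e_surj : Function.Surjective e :=
    (ModuleCat.epi_iff_surjective (P.π.f 0)).1 inferInstance
  have : Module.Projective R (P.complex.X 0) :=
    (IsProjective.iff_projective _).2 (P.projective 0)
  have exact₀ : Function.Exact (P.complex.d 1 0).hom e :=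
    (ShortComplex.ShortExact.moduleCat_exact_iff_function_exact _).1 P.exact₀
  have exact₁ : Function.Exact (P.complex.d 2 1).hom (P.complex.d 1 0).hom :=
    (ShortComplex.ShortExact.moduleCat_exact_iff_function_exact _).1 (P.exact_succ 0)
  calc _ ↔ ∀ f : P.complex.X 1 →ₗ[R] Y, f ∘ₗ (P.complex.d 2 1).hom = 0 →
          ∃ g : P.complex.X 0 →ₗ[R] Y, g ∘ₗ (P.complex.d 1 0).hom = f := by
        rw [subsingleton_ext_one_iff_of_resolution P]
        exact ⟨fun H f hf => (H (ModuleCat.ofHom f) (ModuleCat.hom_ext hf)).imp'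
            (fun g => g.hom) fun g hg => congrArg (fun f => f.hom) hg,
          fun H f hf => (H f.hom (congrArg (fun f => f.hom) hf)).imp'
            ModuleCat.ofHom fun g hg => ModuleCat.hom_ext hg⟩
    _ ↔ HasExtensionProperty e.ker Y := (hasExtensionProperty_ker_iff_of_exact exact₁ exact₀).symm
    _ ↔ HasExtensionProperty q.ker Y := ⟨.of_ker_surjective e_surj hq, .of_ker_surjective hq e_surj⟩

end ExtCriterion

section Depth

open RingTheory.Sequence

variable {A : Type*} [CommRing A] {u v : A}
  {X Y E : Type*} [AddCommGroup X] [Module A X] [AddCommGroup Y] [Module A Y]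
  [AddCommGroup E] [Module A E]

lemma exists_eq_smul_of_smul_eq_smul (hreg : IsWeaklyRegular E [u, v]) {a b : E}
    (h : v • a = u • b) : ∃ c, a = u • c := by
  obtain ⟨-, hv⟩ := (isWeaklyRegular_cons_iff E u [v]).1 hreg
  obtain ⟨hv, -⟩ := (isWeaklyRegular_cons_iff _ v []).1 hv
  have mk_eq_zero (z : E) : (Submodule.Quotient.mk z : QuotSMulTop u E) = 0 ↔ ∃ c, z = u • c := by
    rw [Submodule.Quotient.mk_eq_zero, Submodule.mem_smul_pointwise_iff_exists]
    simp [eq_comm]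
  refine (mk_eq_zero a).1 (hv ?_)
  simpa [← Submodule.Quotient.mk_smul, h] using (mk_eq_zero _).2 ⟨b, rfl⟩

lemma exists_comp_eq_of_isWeaklyRegular (hreg : IsWeaklyRegular E [u, v]) {f : X →ₗ[A] Y}
    (hu : ∀ y, u • y ∈ f.range) (hv : ∀ y, v • y ∈ f.range)
    {g : X →ₗ[A] E} (hker : f.ker ≤ g.ker) : ∃ g' : Y →ₗ[A] E, g' ∘ₗ f = g := by
  have u_reg : IsSMulRegular E u := ((isWeaklyRegular_cons_iff E u [v]).1 hreg).1
  have g_congr {x x' : X} (h : f x = f x') : g x = g x' :=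
    sub_eq_zero.1 <| by simpa using hker (x := x - x') (by simp [h])
  choose xu hxu using hu
  choose xv hxv using hv
  have g_xu_divisible (y : Y) : ∃ c, g (xu y) = u • c :=
    exists_eq_smul_of_smul_eq_smul hreg (b := g (xv y)) <| by
      rw [← map_smul, ← map_smul]
      exact g_congr (by rw [map_smul, map_smul, hxu, hxv, smul_comm])
  choose c hc using g_xu_divisible
  refine ⟨{ toFun := c, map_add' := fun y y' => u_reg ?_, map_smul' := fun a y => u_reg ?_ },
    LinearMap.ext fun x => u_reg ?_⟩
  · simp only [smul_add, ← hc, ← map_add]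
    exact g_congr (by simp [hxu])
  · simp only [RingHom.id_apply, smul_comm u a, ← hc, ← map_smul]
    exact g_congr (by simp [hxu, smul_comm u a])
  · simp only [LinearMap.comp_apply, LinearMap.coe_mk, AddHom.coe_mk, ← hc, ← map_smul]
    exact g_congr (by simp [hxu])

lemma exists_linearMap_notMem_of_ne_top [Module.Projective A X] {m : Ideal A} [m.IsMaximal]
    {I : Submodule A X} (hm : ∀ a ∈ m, ∀ x : X, a • x ∈ I) (hI : I ≠ ⊤) :
    ∃ Λ : X →ₗ[A] A, (∀ x ∈ I, Λ x ∈ m) ∧ ∃ x, Λ x ∉ m := by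
  let : Field (A ⧸ m) := Ideal.Quotient.field m
  let : Module (A ⧸ m) (X ⧸ I) := Module.IsTorsionBySet.module (I := m) <| by
    rintro ⟨x⟩ ⟨a, ha⟩
    exact (Submodule.Quotient.mk_eq_zero I).2 (hm a ha x)
  have : IsScalarTower A (A ⧸ m) (X ⧸ I) := Module.IsTorsionBySet.isScalarTower _
  obtain ⟨x, hx⟩ : ∃ x, x ∉ I := by simpa [Submodule.eq_top_iff'] using hI
  obtain ⟨δ, hδ⟩ : ∃ δ : Module.Dual (A ⧸ m) (X ⧸ I), δ (I.mkQ x) ≠ 0 := by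
    by_contra! h
    exact hx ((Submodule.Quotient.mk_eq_zero I).1
      ((Module.forall_dual_apply_eq_zero_iff (A ⧸ m) _).1 h))
  obtain ⟨Λ, hΛ⟩ := Module.projective_lifting_property (Submodule.mkQ m)
    (δ.restrictScalars A ∘ₗ I.mkQ) (Submodule.mkQ_surjective m)
  have mem_iff (z : X) : Λ z ∈ m ↔ δ (I.mkQ z) = 0 := by
    rw [← LinearMap.restrictScalars_apply A δ, ← LinearMap.comp_apply, ← hΛ,
      LinearMap.comp_apply, Submodule.mkQ_apply, Submodule.Quotient.mk_eq_zero]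
  exact ⟨Λ, fun z hz => (mem_iff z).2 <| by simp [(Submodule.Quotient.mk_eq_zero I).2 hz],
    x, fun h => hδ ((mem_iff x).1 h)⟩

lemma HasExtensionProperty.ker_of_surjective [Module.Projective A Y] {f : X →ₗ[A] Y}
    (hf : Function.Surjective f) : HasExtensionProperty f.ker E := by
  obtain ⟨s, hs⟩ := Module.projective_lifting_property f LinearMap.id hf
  have f_s (y : Y) : f (s y) = y := LinearMap.congr_fun hs y
  intro h
  refine ⟨h ∘ₗ (LinearMap.id - s ∘ₗ f).codRestrict f.ker fun x => by simp [f_s], fun k => ?_⟩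
  rw [LinearMap.comp_apply]
  congr 1
  ext
  simp

lemma exists_eq_smul_of_smul_comp_eq_smul_comp (hreg : IsWeaklyRegular E [u, v])
    {P Q : X →ₗ[A] E} (h : v • P = u • Q) : ∃ ψ : X →ₗ[A] E, P = u • ψ ∧ Q = v • ψ := by
  have u_reg : IsSMulRegular E u := ((isWeaklyRegular_cons_iff E u [v]).1 hreg).1
  have P_divisible (x : X) : ∃ c, P x = u • c :=
    exists_eq_smul_of_smul_eq_smul hreg (LinearMap.congr_fun h x)
  choose c hc using P_divisible
  let ψ : X →ₗ[A] E :=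
    { toFun := c
      map_add' := fun x x' => u_reg <| by simp only [smul_add, ← hc, map_add]
      map_smul' := fun a x => u_reg <| by
        simp only [RingHom.id_apply, smul_comm u a, ← hc, map_smul] }
  refine ⟨ψ, LinearMap.ext hc, LinearMap.ext fun x => u_reg ?_⟩
  calc u • Q x = v • P x := (LinearMap.congr_fun h x).symm
    _ = u • v • ψ x := by rw [hc, smul_comm]; rfl

lemma exists_eq_smul_sub_smul_of_forall_mem_span_pair [Module.Projective A X]
    {φ : X →ₗ[A] A} (hφ : ∀ x, φ x ∈ Ideal.span {u, v}) :
    ∃ P Q : X →ₗ[A] A, φ = v • P - u • Q := by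
  let π : A × A →ₗ[A] Ideal.span {u, v} := LinearMap.codRestrict _
    ((LinearMap.mulLeft A v).coprod (-LinearMap.mulLeft A u)) fun a =>
      Ideal.mem_span_pair.2 ⟨-a.2, a.1, by simp; ring⟩
  have π_surj : Function.Surjective π := by
    rintro ⟨z, hz⟩
    obtain ⟨a, b, rfl⟩ := Ideal.mem_span_pair.1 hz
    exact ⟨(b, -a), Subtype.ext (by simp [π]; ring)⟩
  obtain ⟨PQ, hPQ⟩ := Module.projective_lifting_property π
    (φ.codRestrict (Ideal.span {u, v}) hφ) π_surj
  refine ⟨LinearMap.fst A A A ∘ₗ PQ, LinearMap.snd A A A ∘ₗ PQ, LinearMap.ext fun x => ?_⟩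
  simpa [π, sub_eq_add_neg] using congrArg Subtype.val (LinearMap.congr_fun hPQ x).symm

lemma HasExtensionProperty.apply_mem_of_forall_range [Module.Projective A X] {f : X →ₗ[A] Y}
    (hext : HasExtensionProperty f.ker A) (hreg : IsWeaklyRegular A [u, v])
    (hu : ∀ y, u • y ∈ f.range) (hv : ∀ y, v • y ∈ f.range) {Λ : Y →ₗ[A] A}
    (hΛ : ∀ x, Λ (f x) ∈ Ideal.span {u, v}) (y : Y) : Λ y ∈ Ideal.span {u, v} := by
  -- `Λ ∘ f = v P - u Q`; on `ker f` the pair `(P, Q)` is a multiple `(u ψ, v ψ)`, and an extension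
  -- `Ψ` of `ψ` corrects `(P, Q)` to a pair that descends along `f`.
  obtain ⟨P, Q, hPQ⟩ := exists_eq_smul_sub_smul_of_forall_mem_span_pair (φ := Λ ∘ₗ f) hΛ
  obtain ⟨ψ, hPψ, hQψ⟩ : ∃ ψ : f.ker →ₗ[A] A,
      P ∘ₗ f.ker.subtype = u • ψ ∧ Q ∘ₗ f.ker.subtype = v • ψ := by
    refine exists_eq_smul_of_smul_comp_eq_smul_comp hreg (LinearMap.ext fun k => ?_)
    have := LinearMap.congr_fun hPQ k
    rw [LinearMap.comp_apply, LinearMap.mem_ker.1 k.2, map_zero] at this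
    exact sub_eq_zero.1 this.symm
  obtain ⟨Ψ, hΨ⟩ := hext ψ
  have ker_le_P : f.ker ≤ (P - u • Ψ).ker := fun k hk => by
    have : P k = u • ψ ⟨k, hk⟩ := LinearMap.congr_fun hPψ ⟨k, hk⟩
    simp [this, ← hΨ]
  have ker_le_Q : f.ker ≤ (Q - v • Ψ).ker := fun k hk => by
    have : Q k = v • ψ ⟨k, hk⟩ := LinearMap.congr_fun hQψ ⟨k, hk⟩
    simp [this, ← hΨ]
  obtain ⟨P', hP'⟩ := exists_comp_eq_of_isWeaklyRegular hreg hu hv ker_le_P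
  obtain ⟨Q', hQ'⟩ := exists_comp_eq_of_isWeaklyRegular hreg hu hv ker_le_Q
  have Λ_eq (x : X) : Λ (f x) = v * P' (f x) - u * Q' (f x) := by
    have := LinearMap.congr_fun hPQ x
    have := LinearMap.congr_fun hP' x
    have := LinearMap.congr_fun hQ' x
    simp only [LinearMap.comp_apply, LinearMap.sub_apply, LinearMap.smul_apply, smul_eq_mul] at *
    linear_combination ‹Λ (f x) = _› - v * ‹P' (f x) = _› + u * ‹Q' (f x) = _›
  have u_reg : IsSMulRegular A u := ((isWeaklyRegular_cons_iff A u [v]).1 hreg).1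
  have : Λ y = v * P' y - u * Q' y := u_reg <| by
    obtain ⟨x, hx⟩ := hu y
    have := Λ_eq x
    simp only [hx, map_smul, smul_eq_mul] at this ⊢
    linear_combination this
  rw [this]
  exact Ideal.mem_span_pair.2 ⟨-Q' y, P' y, by ring⟩

theorem hasExtensionProperty_ker_iff_surjective [Module.Projective A X] [Module.Projective A Y]
    (hreg : IsWeaklyRegular A [u, v]) [hmax : (Ideal.span {u, v}).IsMaximal] {f : X →ₗ[A] Y}
    (hu : ∀ y, u • y ∈ f.range) (hv : ∀ y, v • y ∈ f.range) :
    HasExtensionProperty f.ker A ↔ Function.Surjective f := by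
  refine ⟨fun hext => ?_, .ker_of_surjective⟩
  by_contra hsurj
  have smul_mem : ∀ a ∈ Ideal.span {u, v}, ∀ y : Y, a • y ∈ f.range := by
    intro a ha y
    obtain ⟨b, c, rfl⟩ := Ideal.mem_span_pair.1 ha
    rw [add_smul, mul_smul, mul_smul]
    exact add_mem (Submodule.smul_mem _ _ (hu y)) (Submodule.smul_mem _ _ (hv y))
  obtain ⟨Λ, hΛ, y, hy⟩ :=
    exists_linearMap_notMem_of_ne_top smul_mem (mt LinearMap.range_eq_top.1 hsurj)
  exact hy (hext.apply_mem_of_forall_range hreg hu hv (fun x => hΛ _ ⟨x, rfl⟩) y)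

lemma hasExtensionProperty_iff_of_isWeaklyRegular (hreg : IsWeaklyRegular E [u, v])
    {f : X →ₗ[A] Y} {K : Submodule A Y} (hfK : f.range ≤ K)
    (hu : ∀ k ∈ K, u • k ∈ f.range) (hv : ∀ k ∈ K, v • k ∈ f.range)
    (hker : ∀ x ∈ f.ker, u • x = 0) :
    HasExtensionProperty K E ↔ ∀ ψ : X →ₗ[A] E, ∃ Ψ : Y →ₗ[A] E, Ψ ∘ₗ f = ψ := by
  have u_reg : IsSMulRegular E u := ((isWeaklyRegular_cons_iff E u [v]).1 hreg).1
  let fK : X →ₗ[A] K := f.codRestrict K fun x => hfK ⟨x, rfl⟩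
  constructor
  · intro hext ψ
    obtain ⟨h, rfl⟩ := exists_comp_eq_of_isWeaklyRegular hreg (f := fK)
      (fun k => (hu k k.2).imp fun x hx => Subtype.ext hx)
      (fun k => (hv k k.2).imp fun x hx => Subtype.ext hx)
      (g := ψ) (fun x hx => u_reg <| by
        simp [← map_smul, hker x (congrArg Subtype.val hx)])
    obtain ⟨H, hH⟩ := hext h
    exact ⟨H, LinearMap.ext fun x => hH (fK x)⟩
  · intro hext h
    obtain ⟨Ψ, hΨ⟩ := hext (h ∘ₗ fK)
    refine ⟨Ψ, fun k => u_reg ?_⟩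
    obtain ⟨x, hx⟩ := hu k k.2
    have fK_x : fK x = u • k := Subtype.ext hx
    simpa [hx, fK_x] using LinearMap.congr_fun hΨ x

end Depth

section DualizingForm

open TensorProduct

lemma linearMap_tensor_ext {A R W X : Type*} [CommRing A] [CommRing R] [Algebra A R]
    [AddCommGroup W] [Module R W] [AddCommGroup X] [Module A X] [Module R X] [IsScalarTower A R X]
    {g g' : X ⊗[R] W →ₗ[A] A} (h : ∀ x w, g (x ⊗ₜ w) = g' (x ⊗ₜ w)) :
    g = g' :=
  LinearMap.ext fun z => by
    induction z with
    | zero => simp only [map_zero]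
    | add z₁ z₂ h₁ h₂ => simp only [map_add, h₁, h₂]
    | tmul x w => exact h x w

variable {A R W X : Type*} [CommRing A] [CommRing R] [Algebra A R]
  [AddCommGroup W] [Module A W] [Module R W] [IsScalarTower A R W]
  [AddCommGroup X] [Module A X] [Module R X] [IsScalarTower A R X]

/-- The `A`-linear form `φ` on the `R`-module `W` is dualizing if `r ↦ φ (r • ·)` is a bijection
from `R` onto `Hom_A(W, A)`, that is, if `Hom_A(W, A)` is free over `R` on the generator `φ`. -/
def IsDualizingForm (R : Type*) [CommRing R] [Algebra A R] [Module R W] [IsScalarTower A R W]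
    (φ : W →ₗ[A] A) : Prop :=
  Function.Bijective fun r : R => φ ∘ₗ Algebra.lsmul A A W r

/-- The `A`-linear form `x ⊗ w ↦ φ (h x • w)` on `X ⊗ W` attached to an `R`-linear form `h` on `X`;
this is the adjunction `Hom_R(X, Hom_A(W, A)) ≃ Hom_A(X ⊗ W, A)` in the presence of `φ`. -/
def tensorForm (φ : W →ₗ[A] A) (h : X →ₗ[R] R) : X ⊗[R] W →ₗ[A] A :=
  φ ∘ₗ (TensorProduct.lid R W ∘ₗ h.rTensor W).restrictScalars A

@[simp]
lemma tensorForm_tmul (φ : W →ₗ[A] A) (h : X →ₗ[R] R) (x : X) (w : W) :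
    tensorForm φ h (x ⊗ₜ w) = φ (h x • w) := by
  simp [tensorForm]

lemma IsDualizingForm.exists_tensorForm_eq {φ : W →ₗ[A] A} (hφ : IsDualizingForm R φ)
    (g : X ⊗[R] W →ₗ[A] A) : ∃ h : X →ₗ[R] R, tensorForm φ h = g := by
  have exists_scalar (x : X) : ∃ r : R, ∀ w, φ (r • w) = g (x ⊗ₜ w) :=
    (hφ.2 (g ∘ₗ ((TensorProduct.mk R X W x).restrictScalars A))).imp fun r hr =>
      LinearMap.congr_fun hr
  choose r hr using exists_scalar
  have r_unique {s t : R} (h : ∀ w, φ (s • w) = φ (t • w)) : s = t := hφ.1 (LinearMap.ext h)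
  exact ⟨{ toFun := r
           map_add' := fun x y => r_unique fun w => by simp [hr, add_smul, add_tmul]
           map_smul' := fun a x => r_unique fun w => by
             simp [hr, mul_smul, smul_tmul, mul_comm a] },
    linearMap_tensor_ext fun x w => by simp [hr]⟩

lemma IsDualizingForm.hasExtensionProperty_iff {φ : W →ₗ[A] A} (hφ : IsDualizingForm R φ)
    (K : Submodule R X) :
    HasExtensionProperty K R ↔
      ∀ ψ : K ⊗[R] W →ₗ[A] A, ∃ Ψ : X ⊗[R] W →ₗ[A] A,
        Ψ ∘ₗ (K.subtype.rTensor W).restrictScalars A = ψ := by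
  constructor
  · intro hext ψ
    obtain ⟨h, rfl⟩ := hφ.exists_tensorForm_eq ψ
    obtain ⟨H, hH⟩ := hext h
    exact ⟨tensorForm φ H, linearMap_tensor_ext fun k w => by simp [hH]⟩
  · intro hext h
    obtain ⟨Ψ, hΨ⟩ := hext (tensorForm φ h)
    obtain ⟨H, rfl⟩ := hφ.exists_tensorForm_eq Ψ
    refine ⟨H, fun k => hφ.1 (LinearMap.ext fun w => ?_)⟩
    simpa using LinearMap.congr_fun hΨ (k ⊗ₜ w)

end DualizingForm

section Products

open TensorProduct RingTheory.Sequence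

variable {A R S : Type*} [CommRing A] [CommRing R] [CommRing S] [Algebra A R] [Algebra R S]
  [Algebra A S] [IsScalarTower A R S] {W W' M N : Submodule R S}
  {X Y : Type*} [AddCommGroup X] [Module R X] [AddCommGroup Y] [Module R Y]

lemma smul_eq_tmul_of_algebraMap_eq_mul {δ : W →ₗ[R] R} {w' : S}
    (hδ : ∀ w, algebraMap R S (δ w) = w * w') (w : W) (z : X ⊗[R] W) :
    δ w • z = TensorProduct.rid R X (δ.lTensor X z) ⊗ₜ w := by
  have exchange (w₁ : W) : δ w • w₁ = δ w₁ • w := Subtype.ext <| by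
    simp only [Submodule.coe_smul, Algebra.smul_def, hδ]; ring
  induction z with
  | zero => simp
  | add z₁ z₂ h₁ h₂ => simp only [smul_add, h₁, h₂, map_add, add_tmul]
  | tmul x w₁ => simp [← tmul_smul, exchange, smul_tmul]

variable [FaithfulSMul R S]

lemma exists_linearMap_algebraMap_eq_mul (hWW' : W * W' ≤ 1) {w' : S} (hw' : w' ∈ W') :
    ∃ δ : W →ₗ[R] R, ∀ w, algebraMap R S (δ w) = w * w' := by
  let ι : R ≃ₗ[R] (1 : Submodule R S) :=
    LinearEquiv.ofInjective (Algebra.linearMap R S) (FaithfulSMul.algebraMap_injective R S)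
      ≪≫ₗ .ofEq _ _ Submodule.one_eq_range.symm
  let mulRight : W →ₗ[R] (1 : Submodule R S) :=
    (LinearMap.mulRight R w' ∘ₗ W.subtype).codRestrict 1 fun w =>
      hWW' (Submodule.mul_mem_mul w.2 hw')
  exact ⟨ι.symm ∘ₗ mulRight, fun w => congrArg Subtype.val (ι.apply_symm_apply (mulRight w))⟩

lemma smul_eq_zero_of_forall_lTensor_eq_zero (hWW' : W * W' ≤ 1) {z : X ⊗[R] W}
    (hz : ∀ w' ∈ W', ∀ δ : W →ₗ[R] R, (∀ w, algebraMap R S (δ w) = w * w') → δ.lTensor X z = 0)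
    {r : R} (hr : algebraMap R S r ∈ W * W') : r • z = 0 := by
  suffices ∀ s ∈ W * W', ∀ r, algebraMap R S r = s → r • z = 0 from this _ hr r rfl
  have algebraMap_inj := FaithfulSMul.algebraMap_injective R S
  intro s hs
  induction hs using Submodule.mul_induction_on' with
  | mem_mul_mem w hw w' hw' =>
    intro r hr
    obtain ⟨δ, hδ⟩ := exists_linearMap_algebraMap_eq_mul hWW' hw'
    obtain rfl : δ ⟨w, hw⟩ = r := algebraMap_inj <| by rw [hδ, hr]
    rw [smul_eq_tmul_of_algebraMap_eq_mul hδ, hz w' hw' δ hδ, map_zero, zero_tmul]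
  | add s₁ hs₁ s₂ hs₂ ih₁ ih₂ =>
    intro r hr
    obtain ⟨r₁, hr₁⟩ := Submodule.mem_one.1 (hWW' hs₁)
    obtain ⟨r₂, hr₂⟩ := Submodule.mem_one.1 (hWW' hs₂)
    obtain rfl : r₁ + r₂ = r := algebraMap_inj <| by rw [map_add, hr₁, hr₂, hr]
    rw [add_smul, ih₁ r₁ hr₁, ih₂ r₂ hr₂, add_zero]

lemma smul_eq_zero_of_rTensor_eq_zero (hWW' : W * W' ≤ 1) {f : X →ₗ[R] Y}
    (hf : Function.Injective f) {z : X ⊗[R] W} (hz : f.rTensor W z = 0) {r : R}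
    (hr : algebraMap R S r ∈ W * W') : r • z = 0 := by
  refine smul_eq_zero_of_forall_lTensor_eq_zero hWW' (fun w' _ δ _ => ?_) hr
  have : f.rTensor R (δ.lTensor X z) = 0 := by
    rw [← LinearMap.comp_apply, LinearMap.rTensor_comp_lTensor, ← LinearMap.lTensor_comp_rTensor,
      LinearMap.comp_apply, hz, map_zero]
  exact Module.Flat.rTensor_preserves_injective_linearMap f hf (this.trans (map_zero _).symm)

lemma smul_eq_zero_of_mulMap_eq_zero (hWW' : W * W' ≤ 1) {z : M ⊗[R] W}
    (hz : Submodule.mulMap M W z = 0) {r : R} (hr : algebraMap R S r ∈ W * W') : r • z = 0 := by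
  refine smul_eq_zero_of_forall_lTensor_eq_zero hWW' (fun w' _ δ hδ => ?_) hr
  have mulMap_mul (z : M ⊗[R] W) :
      (TensorProduct.rid R M (δ.lTensor M z) : S) = Submodule.mulMap M W z * w' := by
    induction z with
    | zero => simp
    | add z₁ z₂ h₁ h₂ => simp only [map_add, Submodule.coe_add, h₁, h₂, add_mul]
    | tmul x w =>
      simp only [LinearMap.lTensor_tmul, rid_tmul, Submodule.coe_smul, Algebra.smul_def, hδ,
        Submodule.mulMap_tmul]
      ring
  refine (TensorProduct.rid R M).injective (Subtype.ext ?_)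
  rw [mulMap_mul, hz, zero_mul, map_zero, Submodule.coe_zero]

end Products

section ExtOne

open CategoryTheory TensorProduct RingTheory.Sequence

universe u

variable {A : Type*} {R S : Type u} [CommRing A] [CommRing R] [CommRing S] [Algebra R S]
  {W W' M N : Submodule R S}
  {F : Type*} [AddCommGroup F] [Module R F] {q : F →ₗ[R] M} {μ : F ⊗[R] W →ₗ[R] N}

lemma mem_range_iff_of_eq_mulMap (hq : Function.Surjective q)
    (hμ : ∀ z, (μ z : S) = Submodule.mulMap M W (q.rTensor W z)) (n : N) :
    n ∈ μ.range ↔ (n : S) ∈ M * W := by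
  rw [← Submodule.mulMap_range]
  constructor
  · rintro ⟨z, rfl⟩
    exact ⟨_, (hμ z).symm⟩
  · rintro ⟨y, hy⟩
    obtain ⟨z, rfl⟩ := LinearMap.rTensor_surjective W hq y
    exact ⟨z, Subtype.ext <| (hμ z).trans hy⟩

lemma smul_mem_range_of_mul_le (hq : Function.Surjective q)
    (hμ : ∀ z, (μ z : S) = Submodule.mulMap M W (q.rTensor W z)) (hNW' : N * W' ≤ M) {r : R}
    (hr : algebraMap R S r ∈ W * W') (n : N) : r • n ∈ μ.range := by
  rw [mem_range_iff_of_eq_mulMap hq hμ, Submodule.coe_smul, Algebra.smul_def, mul_comm _ (n : S)]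
  have : N * (W * W') ≤ M * W := by
    rw [mul_comm W, ← mul_assoc]; exact mul_le_mul_left hNW' W
  exact this (Submodule.mul_mem_mul n.2 hr)

lemma smul_mem_range_rTensor_ker [FaithfulSMul R S] (hq : Function.Surjective q)
    (hμ : ∀ z, (μ z : S) = Submodule.mulMap M W (q.rTensor W z)) (hWW' : W * W' ≤ 1) {r : R}
    (hr : algebraMap R S r ∈ W * W') {z : F ⊗[R] W} (hz : μ z = 0) :
    r • z ∈ (q.ker.subtype.rTensor W).range := by
  refine (rTensor_exact W (LinearMap.exact_subtype_ker_map q) hq _).1 ?_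
  rw [map_smul]
  exact smul_eq_zero_of_mulMap_eq_zero hWW' (by rw [← hμ, hz, Submodule.coe_zero]) hr

variable [Algebra A R] [Algebra A S] [IsScalarTower A R S] [FaithfulSMul R S]

theorem IsDualizingForm.hasExtensionProperty_ker_iff_mul_eq [Module A F] [IsScalarTower A R F]
    [Module.Projective A (F ⊗[R] W)] [Module.Projective A N] (hq : Function.Surjective q)
    {φ : W →ₗ[A] A} (hφ : IsDualizingForm R φ)
    (hWW' : W * W' ≤ 1) (hMW : M * W ≤ N) (hNW' : N * W' ≤ M)
    {u v : A} (hreg : IsWeaklyRegular A [u, v]) [(Ideal.span {u, v}).IsMaximal]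
    (hu : algebraMap R S (algebraMap A R u) ∈ W * W')
    (hv : algebraMap R S (algebraMap A R v) ∈ W * W') :
    HasExtensionProperty q.ker R ↔ M * W = N := by
  let i : q.ker ⊗[R] W →ₗ[A] F ⊗[R] W := (q.ker.subtype.rTensor W).restrictScalars A
  let μ : F ⊗[R] W →ₗ[R] N := (Submodule.mulMap M W ∘ₗ q.rTensor W).codRestrict N
    fun z => hMW <| by rw [← Submodule.mulMap_range]; exact ⟨_, rfl⟩
  have hμ (z) : (μ z : S) = Submodule.mulMap M W (q.rTensor W z) := rfl
  have smul_mem_range_μ {a : A} (ha : algebraMap R S (algebraMap A R a) ∈ W * W') (n : N) :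
      a • n ∈ (μ.restrictScalars A).range := by
    rw [← algebraMap_smul R a n]; exact smul_mem_range_of_mul_le hq hμ hNW' ha n
  have smul_mem_range_i {a : A} (ha : algebraMap R S (algebraMap A R a) ∈ W * W') :
      ∀ z ∈ (μ.restrictScalars A).ker, a • z ∈ i.range := fun z hz => by
    rw [← algebraMap_smul R a z]; exact smul_mem_range_rTensor_ker hq hμ hWW' ha hz
  have range_i_le : i.range ≤ (μ.restrictScalars A).ker := by
    rintro _ ⟨z, rfl⟩
    refine Subtype.ext ((hμ _).trans ?_)
    have := (rTensor_exact W (LinearMap.exact_subtype_ker_map q) hq _).2 ⟨z, rfl⟩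
    simp [i, this]
  have smul_ker_i : ∀ z ∈ i.ker, u • z = 0 := fun z hz => by
    rw [← algebraMap_smul R u z]
    exact smul_eq_zero_of_rTensor_eq_zero hWW' q.ker.subtype_injective hz hu
  calc _ ↔ _ := hφ.hasExtensionProperty_iff q.ker
    _ ↔ HasExtensionProperty (μ.restrictScalars A).ker A :=
        (hasExtensionProperty_iff_of_isWeaklyRegular hreg range_i_le (smul_mem_range_i hu)
          (smul_mem_range_i hv) smul_ker_i).symm
    _ ↔ Function.Surjective μ :=
        hasExtensionProperty_ker_iff_surjective hreg (smul_mem_range_μ hu) (smul_mem_range_μ hv)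
    _ ↔ ∀ n : N, (n : S) ∈ M * W := forall_congr' (mem_range_iff_of_eq_mulMap hq hμ)
    _ ↔ M * W = N := ⟨fun h => le_antisymm hMW fun n hn => h ⟨n, hn⟩, fun h n => h ▸ n.2⟩

theorem IsDualizingForm.subsingleton_ext_one_iff_mul_eq [Module.Projective A W]
    [Module.Projective A N] {φ : W →ₗ[A] A} (hφ : IsDualizingForm R φ)
    (hWW' : W * W' ≤ 1) (hMW : M * W ≤ N) (hNW' : N * W' ≤ M)
    {u v : A} (hreg : IsWeaklyRegular A [u, v]) [(Ideal.span {u, v}).IsMaximal]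
    (hu : algebraMap A S u ∈ W * W') (hv : algebraMap A S v ∈ W * W') :
    Subsingleton (((Ext R (ModuleCat R) 1).obj (Opposite.op (ModuleCat.of R M))).obj
      (ModuleCat.of R R)) ↔ M * W = N := by
  rw [IsScalarTower.algebraMap_apply A R S] at hu hv
  classical
  have q_surj := Finsupp.linearCombination_id_surjective R M
  have : Module.Projective A (M →₀ W) := .of_equiv' (finsuppLequivDFinsupp A).symm
  have : Module.Projective A ((M →₀ R) ⊗[R] W) :=
    .of_equiv' ((finsuppScalarLeft R W M).restrictScalars A).symm
  exact (subsingleton_ext_one_iff q_surj).trans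
    (hφ.hasExtensionProperty_ker_iff_mul_eq q_surj hWW' hMW hNW' hreg hu hv)

end ExtOne

section FrobeniusSystem

/-- A Frobenius system for a ring map `f : B → C`: a `B`-linear form on `C` together with dual
families `basis` and `dual`, which exhibit `C` as a Frobenius extension of `B`. The form reads off
the coefficient of the distinguished member `basis top`. Ring maps are used instead of `Algebra`
instances because below `B` and `C` may be the same polynomial ring. -/
structure FrobeniusSystem {B C : Type*} [CommRing B] [CommRing C] (f : B →+* C)
    (κ : Type*) [Fintype κ] [DecidableEq κ] where
  form : C →+ B
  basis : κ → C
  dual : κ → C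
  top : κ
  form_map_mul : ∀ b c, form (f b * c) = b * form c
  sum_form_mul_dual : ∀ c, ∑ i, f (form (c * dual i)) * basis i = c
  form_basis : ∀ i, form (basis i) = if i = top then 1 else 0

namespace FrobeniusSystem

variable {B C D : Type*} [CommRing B] [CommRing C] [CommRing D] {f : B →+* C} {g : C →+* D}
  {κ κ' : Type*} [Fintype κ] [DecidableEq κ] [Fintype κ'] [DecidableEq κ']

/-- Frobenius systems compose along towers of ring maps. -/
def comp (G : FrobeniusSystem g κ') (F : FrobeniusSystem f κ) :
    FrobeniusSystem (g.comp f) (κ × κ') where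
  form := F.form.comp G.form
  basis i := g (F.basis i.1) * G.basis i.2
  dual i := g (F.dual i.1) * G.dual i.2
  top := (F.top, G.top)
  form_map_mul b d := by simp [G.form_map_mul, F.form_map_mul]
  sum_form_mul_dual d := by
    have inner (j : κ') : ∑ i, g (f (F.form (G.form (d * G.dual j) * F.dual i)) * F.basis i) =
        g (G.form (d * G.dual j)) := by rw [← map_sum, F.sum_form_mul_dual]
    have form_eq (i : κ) (j : κ') :
        G.form (d * (g (F.dual i) * G.dual j)) = G.form (d * G.dual j) * F.dual i := by
      rw [mul_left_comm, G.form_map_mul, mul_comm]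
    simp only [AddMonoidHom.comp_apply, RingHom.comp_apply, form_eq, Fintype.sum_prod_type_right]
    simp only [← mul_assoc, ← map_mul, ← Finset.sum_mul, inner, G.sum_form_mul_dual]
  form_basis i := by
    simp only [AddMonoidHom.comp_apply, G.form_map_mul, G.form_basis, mul_ite, mul_one, mul_zero,
      Prod.ext_iff, apply_ite F.form, map_zero, F.form_basis]
    split_ifs <;> simp_all

end FrobeniusSystem

section PowerResidue

variable {B C : Type*} [CommRing B] [CommRing C]

/-- The coefficient of `x ^ (d - 1)` in the reduction of `x ^ m` modulo `x ^ d = a`. -/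
def topCoeff (d : ℕ) (a : B) (m : ℕ) : B :=
  if m % d = d - 1 then a ^ (m / d) else 0

lemma topCoeff_add_mul {d : ℕ} (hd : 0 < d) (a : B) (m q : ℕ) :
    topCoeff d a (m + d * q) = a ^ q * topCoeff d a m := by
  simp only [topCoeff, Nat.add_mul_mod_self_left, Nat.add_mul_div_left _ _ hd, pow_add]
  rw [mul_ite, mul_zero, mul_comm]

lemma topCoeff_of_lt {d m : ℕ} (hm : m < d) (a : B) :
    topCoeff d a m = if m = d - 1 then 1 else 0 := by
  rw [topCoeff, Nat.mod_eq_of_lt hm, Nat.div_eq_of_lt hm, pow_zero]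

lemma topCoeff_add_sub {d r s : ℕ} (hr : r < d) (hs : s < d) (a : B) :
    topCoeff d a (s + (d - 1 - r)) = if r = s then 1 else 0 := by
  obtain h | h := lt_or_ge r s
  · rw [show s + (d - 1 - r) = (s - r - 1) + d * 1 by omega, topCoeff_add_mul (by omega),
      topCoeff_of_lt (by omega), if_neg (by omega), if_neg h.ne, mul_zero]
  · rw [topCoeff_of_lt (by omega)]
    exact if_congr (by omega) rfl rfl

lemma sum_topCoeff_mul_pow {f : B →+* C} {d : ℕ} (hd : 0 < d) {a : B} {x : C} (hx : x ^ d = f a)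
    (m : ℕ) : ∑ r : Fin d, f (topCoeff d a (m + (d - 1 - r))) * x ^ (r : ℕ) = x ^ m := by
  let s : Fin d := ⟨m % d, Nat.mod_lt m hd⟩
  have term (r : Fin d) : f (topCoeff d a (m + (d - 1 - r))) * x ^ (r : ℕ) =
      if r = s then f a ^ (m / d) * x ^ (r : ℕ) else 0 := by
    conv_lhs => rw [← Nat.mod_add_div m d, add_right_comm, topCoeff_add_mul hd,
      topCoeff_add_sub r.2 (Nat.mod_lt m hd)]
    simp only [s, Fin.ext_iff, mul_ite, mul_one, mul_zero, apply_ite f, map_pow, map_zero, ite_mul,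
      zero_mul]
  rw [Finset.sum_congr rfl fun r _ => term r, Finset.sum_ite_eq' _ s, if_pos (Finset.mem_univ s),
    ← hx, ← pow_mul, ← pow_add, Nat.div_add_mod]

end PowerResidue

section Kummer

variable {B C' κ : Type*} [CommRing B] [CommRing C'] [Fintype κ]
  {f : B →+* C'} {d : κ → ℕ} {a : κ → B} {x : κ → C'}

/-- The coefficient of `∏ X_k ^ (d_k - 1)` in the reduction of a polynomial modulo the relations
`X_k ^ d_k = a_k`. -/
def topForm (d : κ → ℕ) (a : κ → B) : MvPolynomial κ B →ₗ[B] B :=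
  (basisMonomials κ B).constr B fun m => ∏ k, topCoeff (d k) (a k) (m k)

lemma topForm_monomial (m : κ →₀ ℕ) :
    topForm d a (monomial m 1) = ∏ k, topCoeff (d k) (a k) (m k) :=
  (basisMonomials κ B).constr_basis B _ m

lemma topForm_X_pow_mul (hd : ∀ k, 0 < d k) (k : κ) (P : MvPolynomial κ B) :
    topForm d a (X k ^ d k * P) = a k * topForm d a P := by
  classical
  suffices topForm d a ∘ₗ LinearMap.mulLeft B (X k ^ d k) = a k • topForm d a from
    LinearMap.congr_fun this P
  refine (basisMonomials κ B).ext fun m => ?_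
  have shifted (l : κ) : topCoeff (d l) (a l) ((Finsupp.single k (d k) + m) l) =
      (if l = k then a k else 1) * topCoeff (d l) (a l) (m l) := by
    obtain rfl | hlk := eq_or_ne l k
    · simpa [add_comm] using topCoeff_add_mul (hd l) (a l) (m l) 1
    · simp [hlk]
  simp only [coe_basisMonomials, LinearMap.comp_apply, LinearMap.mulLeft_apply,
    LinearMap.smul_apply, X_pow_eq_monomial, monomial_mul, mul_one, topForm_monomial, shifted,
    Finset.prod_mul_distrib, Finset.prod_ite_eq', Finset.mem_univ, if_true, smul_eq_mul]

lemma topForm_eq_zero_of_mem (hd : ∀ k, 0 < d k) {P : MvPolynomial κ B}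
    (hP : P ∈ Ideal.span (Set.range fun k => X k ^ d k - C (a k))) : topForm d a P = 0 := by
  obtain ⟨c, rfl⟩ := Ideal.mem_span_range_iff_exists_fun.1 hP
  rw [map_sum]
  refine Finset.sum_eq_zero fun k _ => ?_
  rw [mul_comm, sub_mul, map_sub, topForm_X_pow_mul hd, C_mul', map_smul, smul_eq_mul, sub_self]

lemma topForm_monomial_mul_prod (m : κ →₀ ℕ) (e : κ → ℕ) :
    topForm d a (monomial m 1 * ∏ k, X k ^ e k) = ∏ k, topCoeff (d k) (a k) (m k + e k) := by
  have prod_eq : ∏ k, (X k : MvPolynomial κ B) ^ e k =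
      monomial (Finsupp.equivFunOnFinite.symm e) 1 := by
    simp [monomial_eq, Finsupp.prod_fintype]
  rw [prod_eq, monomial_mul, mul_one, topForm_monomial]
  rfl

variable [DecidableEq κ]

lemma sum_topForm_monomial_mul_prod (hd : ∀ k, 0 < d k) (hx : ∀ k, x k ^ d k = f (a k))
    (m : κ →₀ ℕ) :
    ∑ r : ∀ k, Fin (d k), f (topForm d a (monomial m 1 * ∏ k, X k ^ (d k - 1 - r k))) *
      ∏ k, x k ^ (r k : ℕ) = ∏ k, x k ^ m k := by
  simp only [topForm_monomial_mul_prod, map_prod, ← Finset.prod_mul_distrib,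
    ← sum_topCoeff_mul_pow (hd _) (hx _) (m _), Finset.prod_univ_sum, Fintype.piFinset_univ]

lemma sum_topForm_mul_prod (hd : ∀ k, 0 < d k) (hx : ∀ k, x k ^ d k = f (a k))
    (P : MvPolynomial κ B) :
    ∑ r : ∀ k, Fin (d k), f (topForm d a (P * ∏ k, X k ^ (d k - 1 - r k))) *
      ∏ k, x k ^ (r k : ℕ) = eval₂Hom f x P := by
  induction P using MvPolynomial.induction_on' with
  | monomial m b =>
    have eq : monomial m b = b • monomial m (1 : B) := by rw [smul_monomial, smul_eq_mul, mul_one]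
    simp only [eq, smul_mul_assoc, map_smul, smul_eq_mul, map_mul, mul_assoc, ← Finset.mul_sum,
      sum_topForm_monomial_mul_prod hd hx]
    simp [eq.symm, Finsupp.prod_fintype]
  | add P Q hP hQ => simp only [add_mul, map_add, Finset.sum_add_distrib, hP, hQ]

/-- The Frobenius system of monomials for the `B`-algebra generated by elements `x_k` with the
relations `x_k ^ d_k = a_k`. -/
def FrobeniusSystem.ofPowers (hd : ∀ k, 0 < d k) (hsurj : Function.Surjective (eval₂Hom f x))
    (hker : RingHom.ker (eval₂Hom f x) =
      Ideal.span (Set.range fun k => X k ^ d k - MvPolynomial.C (a k))) :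
    FrobeniusSystem f (∀ k, Fin (d k)) :=
  let form : C' →+ B := (eval₂Hom f x).toAddMonoidHom.liftOfSurjective hsurj
    ⟨(topForm d a).toAddMonoidHom, fun P hP => topForm_eq_zero_of_mem hd (hker ▸ hP)⟩
  have form_eval (P : MvPolynomial κ B) : form (eval₂Hom f x P) = topForm d a P :=
    AddMonoidHom.liftOfRightInverse_comp_apply _ _ _ _ P
  have hx (k : κ) : x k ^ d k = f (a k) := by
    have : X k ^ d k - MvPolynomial.C (a k) ∈ RingHom.ker (eval₂Hom f x) :=
      hker ▸ Ideal.subset_span ⟨k, rfl⟩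
    simpa [RingHom.mem_ker, sub_eq_zero] using this
  { form
    basis := fun r => ∏ k, x k ^ (r k : ℕ)
    dual := fun r => ∏ k, x k ^ (d k - 1 - r k)
    top := fun k => ⟨d k - 1, Nat.sub_one_lt (hd k).ne'⟩
    form_map_mul := fun b c => by
      obtain ⟨P, rfl⟩ := hsurj c
      rw [← eval₂Hom_C f x b, ← map_mul, form_eval, form_eval, C_mul', map_smul, smul_eq_mul]
    sum_form_mul_dual := fun c => by
      obtain ⟨P, rfl⟩ := hsurj c
      have form_mul_dual (r : ∀ k, Fin (d k)) :
          form (eval₂Hom f x P * ∏ k, x k ^ (d k - 1 - r k)) =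
            topForm d a (P * ∏ k, X k ^ (d k - 1 - r k)) := by
        rw [← form_eval]
        simp
      simp only [form_mul_dual, sum_topForm_mul_prod hd hx]
    form_basis := fun r => by
      have : form (∏ k, x k ^ (r k : ℕ)) =
          topForm d a (monomial 0 1 * ∏ k, X k ^ (r k : ℕ)) := by
        rw [← form_eval]
        simp
      rw [this, topForm_monomial_mul_prod]
      simp only [Finsupp.coe_zero, Pi.zero_apply, zero_add, topCoeff_of_lt (r _).2]
      simp [Finset.prod_ite_zero, funext_iff, Fin.ext_iff] }

end Kummer

end FrobeniusSystem

section GradedFrobenius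

open DirectSum

universe u

namespace FrobeniusSystem

variable {A S κ : Type*} [CommRing A] [CommRing S] [Algebra A S] [Fintype κ] [DecidableEq κ]
  (F : FrobeniusSystem (algebraMap A S) κ)

/-- The form of a Frobenius system of an algebra, as a linear map. -/
def linearForm : S →ₗ[A] A where
  __ := F.form
  map_smul' a s := by simp [Algebra.smul_def, F.form_map_mul]

lemma sum_linearForm_smul (s : S) : ∑ i, F.linearForm (s * F.dual i) • F.basis i = s := by
  simp only [Algebra.smul_def]
  exact F.sum_form_mul_dual s

lemma linearForm_basis (i : κ) : F.linearForm (F.basis i) = if i = F.top then 1 else 0 :=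
  F.form_basis i

lemma linearMap_ext {N : Type*} [AddCommGroup N] [Module A N] {g h : S →ₗ[A] N}
    (heq : ∀ i, g (F.basis i) = h (F.basis i)) : g = h := by
  ext s
  rw [← F.sum_linearForm_smul s]
  simp only [map_sum, map_smul, heq]

include F in
lemma projective : Module.Projective A S :=
  .of_split (LinearMap.pi fun i => F.linearForm ∘ₗ LinearMap.mulRight A (F.dual i))
    (Fintype.linearCombination A F.basis) (LinearMap.ext F.sum_linearForm_smul)

lemma eq_zero_of_forall_linearForm_mul {s : S} (hs : ∀ c, F.linearForm (s * c) = 0) : s = 0 := by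
  rw [← F.sum_linearForm_smul s]
  simp only [hs, zero_smul, Finset.sum_const_zero]

lemma exists_linearForm_mul_eq (g : S →ₗ[A] A) : ∃ t, ∀ s, F.linearForm (t * s) = g s := by
  refine ⟨∑ i, g (F.basis i) • F.dual i, fun s => ?_⟩
  conv_rhs => rw [← F.sum_linearForm_smul s]
  simp only [mul_comm _ s, Finset.mul_sum, map_sum, mul_smul_comm, map_smul, smul_eq_mul,
    mul_comm (F.linearForm _)]

end FrobeniusSystem

variable {A R S Q κ : Type*} [CommRing A] [CommRing R] [CommRing S] [Algebra A R] [Algebra R S]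
  [Algebra A S] [IsScalarTower A R S] [AddCommGroup Q] [DecidableEq Q] [Fintype κ] [DecidableEq κ]
  {𝒜 : Q → Submodule R S} [GradedAlgebra 𝒜]

lemma FrobeniusSystem.linearForm_eq_proj (F : FrobeniusSystem (algebraMap A S) κ) {deg : κ → Q}
    (hdeg : ∀ i, F.basis i ∈ 𝒜 (deg i)) (s : S) :
    F.linearForm s = F.linearForm (GradedAlgebra.proj 𝒜 (deg F.top) s) := by
  suffices F.linearForm =
      F.linearForm ∘ₗ (GradedAlgebra.proj 𝒜 (deg F.top)).restrictScalars A from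
    LinearMap.congr_fun this s
  refine F.linearMap_ext fun i => ?_
  simp only [LinearMap.comp_apply, LinearMap.restrictScalars_apply, GradedAlgebra.proj_apply]
  by_cases h : deg i = deg F.top
  · rw [decompose_of_mem_same 𝒜 (h ▸ hdeg i)]
  · rw [decompose_of_mem_ne 𝒜 (hdeg i) h, map_zero, F.linearForm_basis,
      if_neg fun h' => h (congrArg deg h')]

lemma projective_of_graded [Module.Projective A S] (z : Q) : Module.Projective A (𝒜 z) :=
  .of_split ((𝒜 z).subtype.restrictScalars A)
    (((GradedAlgebra.proj 𝒜 z).codRestrict (𝒜 z) fun _ => SetLike.coe_mem _).restrictScalars A)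
    (LinearMap.ext fun s => Subtype.ext <| decompose_of_mem_same 𝒜 s.2)

theorem FrobeniusSystem.isDualizingForm [FaithfulSMul R S]
    (F : FrobeniusSystem (algebraMap A S) κ) {deg : κ → Q} (hdeg : ∀ i, F.basis i ∈ 𝒜 (deg i))
    (h0 : 𝒜 0 = 1) :
    IsDualizingForm R (F.linearForm ∘ₗ (𝒜 (deg F.top)).subtype.restrictScalars A) := by
  have proj_mul (t : S) (w : 𝒜 (deg F.top)) :
      GradedAlgebra.proj 𝒜 (deg F.top) (t * w) = GradedAlgebra.proj 𝒜 0 t * w := by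
    have := coe_decompose_mul_add_of_right_mem 𝒜 (i := 0) (a := t) w.2
    rwa [zero_add] at this
  constructor
  · intro r r' hrr'
    have form_smul (w : 𝒜 (deg F.top)) : F.linearForm ((r - r') • (w : S)) = 0 := by
      rw [sub_smul, map_sub, sub_eq_zero]
      exact LinearMap.congr_fun hrr' w
    have : algebraMap R S (r - r') = 0 := F.eq_zero_of_forall_linearForm_mul fun c => by
      rw [F.linearForm_eq_proj hdeg, ← Algebra.smul_def, map_smul]
      exact form_smul (decompose 𝒜 c (deg F.top))
    exact sub_eq_zero.1 ((FaithfulSMul.algebraMap_eq_zero_iff R S).1 this)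
  · intro g
    let proj_ω : S →ₗ[R] 𝒜 (deg F.top) :=
      (GradedAlgebra.proj 𝒜 (deg F.top)).codRestrict _ fun _ => SetLike.coe_mem _
    obtain ⟨t, ht⟩ := F.exists_linearForm_mul_eq (g ∘ₗ proj_ω.restrictScalars A)
    obtain ⟨r, hr⟩ : ∃ r, algebraMap R S r = GradedAlgebra.proj 𝒜 0 t :=
      Submodule.mem_one.1 (h0 ▸ SetLike.coe_mem _)
    refine ⟨r, LinearMap.ext fun w => ?_⟩
    calc F.linearForm (r • (w : S)) = F.linearForm (GradedAlgebra.proj 𝒜 0 t * w) := by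
          rw [← hr, Algebra.smul_def]
      _ = F.linearForm (t * w) := by rw [← proj_mul, ← F.linearForm_eq_proj hdeg]
      _ = g (proj_ω w) := ht w
      _ = g w := congrArg g (Subtype.ext (decompose_of_mem_same 𝒜 w.2))

open CategoryTheory RingTheory.Sequence in
theorem FrobeniusSystem.subsingleton_ext_one_iff_mul_eq {A κ Q : Type*} {R S : Type u}
    [CommRing A] [CommRing R] [CommRing S] [Algebra A R] [Algebra R S] [Algebra A S]
    [IsScalarTower A R S] [FaithfulSMul R S] [AddCommGroup Q] [DecidableEq Q] [Fintype κ]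
    [DecidableEq κ] {𝒜 : Q → Submodule R S} [GradedAlgebra 𝒜] (h0 : 𝒜 0 = 1)
    (F : FrobeniusSystem (algebraMap A S) κ) {deg : κ → Q} (hdeg : ∀ i, F.basis i ∈ 𝒜 (deg i))
    {ω : Q} (hω : deg F.top = ω) {u v : A} (hreg : IsWeaklyRegular A [u, v])
    [(Ideal.span {u, v}).IsMaximal] (hu : algebraMap A S u ∈ 𝒜 ω * 𝒜 (-ω))
    (hv : algebraMap A S v ∈ 𝒜 ω * 𝒜 (-ω)) (y : Q) :
    Subsingleton (((Ext R (ModuleCat R) 1).obj (Opposite.op (ModuleCat.of R (𝒜 y)))).obj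
      (ModuleCat.of R R)) ↔ 𝒜 y * 𝒜 ω = 𝒜 (y + ω) := by
  subst hω
  have mul_le {z w s : Q} (h : z + w = s) : 𝒜 z * 𝒜 w ≤ 𝒜 s :=
    Submodule.mul_le.2 fun _ ha _ hb => h ▸ SetLike.mul_mem_graded ha hb
  have := F.projective
  have := projective_of_graded (A := A) (𝒜 := 𝒜)
  exact (F.isDualizingForm hdeg h0).subsingleton_ext_one_iff_mul_eq
    ((mul_le (add_neg_cancel _)).trans h0.le) (mul_le rfl) (mul_le (add_neg_cancel_right _ _))
    hreg hu hv

end GradedFrobenius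

section QuotientGrading

open DirectSum

variable {k P Q : Type*} [CommRing k] [CommRing P] [Algebra k P]

/-- The family of submodules of `P ⧸ I` induced by a grading `𝒢` of `P`; it is a grading of
`P ⧸ I` when the ideal `I` is homogeneous. -/
def quotientGrading (𝒢 : Q → Submodule k P) (I : Ideal P) (z : Q) : Submodule k (P ⧸ I) :=
  (𝒢 z).map (Ideal.Quotient.mkₐ k I).toLinearMap

variable {𝒢 : Q → Submodule k P} {I : Ideal P}

lemma mk_mem_quotientGrading {z : Q} {f : P} (hf : f ∈ 𝒢 z) :
    Ideal.Quotient.mkₐ k I f ∈ quotientGrading 𝒢 I z :=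
  Submodule.mem_map_of_mem hf

variable [AddCommMonoid Q] [DecidableEq Q] [GradedAlgebra 𝒢]

instance quotientGrading.gradedMonoid : SetLike.GradedMonoid (quotientGrading 𝒢 I) where
  one_mem := ⟨1, SetLike.one_mem_graded 𝒢, map_one (Ideal.Quotient.mkₐ k I)⟩
  mul_mem := by
    rintro z w _ _ ⟨f, hf, rfl⟩ ⟨g, hg, rfl⟩
    exact ⟨f * g, SetLike.mul_mem_graded hf hg, map_mul (Ideal.Quotient.mkₐ k I) f g⟩

variable (𝒢 I) in
/-- The quotient map applied in each degree. -/
def directSumMk : (⨁ z, 𝒢 z) →ₐ[k] ⨁ z, quotientGrading 𝒢 I z :=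
  toAlgebra k (fun z => 𝒢 z)
    (fun z => lof k Q (fun z => quotientGrading 𝒢 I z) z ∘ₗ
      (Ideal.Quotient.mkₐ k I).toLinearMap.restrict fun _ => mk_mem_quotientGrading)
    rfl fun f g =>
      (of_mul_of (A := fun z => quotientGrading 𝒢 I z) ⟨_, mk_mem_quotientGrading f.2⟩
        ⟨_, mk_mem_quotientGrading g.2⟩).symm

variable (𝒢 I) in
/-- The algebra map sending a homogeneous element `f` to the class of `f`, placed in its degree. -/
def decomposeMk : P →ₐ[k] ⨁ z, quotientGrading 𝒢 I z :=
  (directSumMk 𝒢 I).comp (decomposeAlgEquiv 𝒢).toAlgHom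

lemma decomposeMk_of_mem {z : Q} {f : P} (hf : f ∈ 𝒢 z) :
    decomposeMk 𝒢 I f =
      of (fun z => quotientGrading 𝒢 I z) z
        ⟨Ideal.Quotient.mkₐ k I f, mk_mem_quotientGrading hf⟩ := by
  change directSumMk 𝒢 I (decompose 𝒢 f) = _
  rw [decompose_of_mem 𝒢 hf]
  exact toAddMonoid_of ..

lemma decomposeMk_eq_zero_of_mem (hI : I.IsHomogeneous 𝒢) {f : P} (hf : f ∈ I) :
    decomposeMk 𝒢 I f = 0 := by
  classical
  rw [← sum_support_decompose 𝒢 f, map_sum]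
  refine Finset.sum_eq_zero fun z _ => ?_
  rw [decomposeMk_of_mem (SetLike.coe_mem _)]
  convert map_zero (of (fun z => quotientGrading 𝒢 I z) z)
  exact Ideal.Quotient.eq_zero_iff_mem.2 (hI z hf)

/-- The grading of the quotient of a graded algebra by a homogeneous ideal. -/
abbrev quotientGradedAlgebra (hI : I.IsHomogeneous 𝒢) : GradedAlgebra (quotientGrading 𝒢 I) :=
  .ofAlgHom _ (Ideal.Quotient.liftₐ I (decomposeMk 𝒢 I) fun _ => decomposeMk_eq_zero_of_mem hI)
    (Ideal.Quotient.algHom_ext _ <| AlgHom.toLinearMap_injective <|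
      decompose_lhom_ext 𝒢 fun z => LinearMap.ext fun f =>
        (congrArg (coeAlgHom _) (decomposeMk_of_mem f.2)).trans (coeAlgHom_of ..))
    (by
      rintro z ⟨_, f, hf, rfl⟩
      exact decomposeMk_of_mem hf)

end QuotientGrading

section DegreeZeroSubalgebra

universe u

variable {k S Q : Type*} [CommRing k] [CommRing S] [Algebra k S] [AddCommGroup Q] [DecidableEq Q]
  {𝒢 : Q → Submodule k S} [GradedAlgebra 𝒢] {R : Subalgebra k S}

/-- A homogeneous component of a graded algebra, as a module over the subalgebra `R` of degree
zero. -/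
def overDegreeZero (hR : Subalgebra.toSubmodule R = 𝒢 0) (z : Q) : Submodule R S where
  __ := (𝒢 z).toAddSubmonoid
  smul_mem' r _ hs :=
    zero_add z ▸ SetLike.mul_mem_graded (hR ▸ r.2 : (r : S) ∈ 𝒢 0) hs

variable (hR : Subalgebra.toSubmodule R = 𝒢 0)

lemma overDegreeZero_zero : overDegreeZero hR 0 = 1 := by
  ext s
  calc s ∈ overDegreeZero hR 0 ↔ s ∈ R := (SetLike.ext_iff.1 hR s).symm
    _ ↔ s ∈ (1 : Submodule R S) :=
      ⟨fun hs => Submodule.mem_one.2 ⟨⟨s, hs⟩, rfl⟩, fun hs => by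
        obtain ⟨r, rfl⟩ := Submodule.mem_one.1 hs
        exact r.2⟩

instance overDegreeZero.gradedAlgebra : GradedAlgebra (overDegreeZero hR) :=
  { ‹GradedAlgebra 𝒢› with }

lemma overDegreeZero_mul_eq_iff (z w v : Q) :
    overDegreeZero hR z * overDegreeZero hR w = overDegreeZero hR v ↔ 𝒢 z * 𝒢 w = 𝒢 v :=
  (Submodule.restrictScalars_injective k R S).eq_iff.symm

open CategoryTheory RingTheory.Sequence in
theorem FrobeniusSystem.subsingleton_ext_one_overDegreeZero_iff {S : Type u} {k A κ Q : Type*}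
    [CommRing k] [CommRing A] [CommRing S] [Algebra k S] [AddCommGroup Q] [DecidableEq Q]
    [Fintype κ] [DecidableEq κ] {𝒢 : Q → Submodule k S} [GradedAlgebra 𝒢] {R : Subalgebra k S}
    (hR : Subalgebra.toSubmodule R = 𝒢 0) {α : A →+* S} (hα : ∀ a, α a ∈ 𝒢 0)
    (F : FrobeniusSystem α κ) {deg : κ → Q} (hdeg : ∀ i, F.basis i ∈ 𝒢 (deg i)) {ω : Q}
    (hω : deg F.top = ω) {u v : A} (hreg : IsWeaklyRegular A [u, v])
    [(Ideal.span {u, v}).IsMaximal] (hu : α u ∈ 𝒢 ω * 𝒢 (-ω)) (hv : α v ∈ 𝒢 ω * 𝒢 (-ω)) (y : Q) :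
    Subsingleton (((Ext R (ModuleCat R) 1).obj
      (Opposite.op (ModuleCat.of R (overDegreeZero hR y)))).obj (ModuleCat.of R R)) ↔
        𝒢 y * 𝒢 ω = 𝒢 (y + ω) := by
  let _ : Algebra A S := α.toAlgebra
  let _ : Algebra A R := (α.codRestrict R fun a => hR.ge (hα a)).toAlgebra
  have : IsScalarTower A R S := .of_algebraMap_eq fun _ => rfl
  rw [← overDegreeZero_mul_eq_iff hR]
  exact F.subsingleton_ext_one_iff_mul_eq (𝒜 := overDegreeZero hR) (overDegreeZero_zero hR) hdeg hω
    hreg hu hv y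

end DegreeZeroSubalgebra

section Coarsening

variable {σ R M N : Type*} [CommSemiring R] [AddCommMonoid M] [AddCommMonoid N]

lemma weightedHomogeneousSubmodule_comp (w : σ → M) (q : M →+ N) (z : N) :
    weightedHomogeneousSubmodule R (q ∘ w) z =
      ⨆ (y : M) (_ : q y = z), weightedHomogeneousSubmodule R w y := by
  have weight_comp (m : σ →₀ ℕ) : Finsupp.weight (q ∘ w) m = q (Finsupp.weight w m) := by
    simp only [Finsupp.weight_apply, map_finsuppSum, map_nsmul, Function.comp_apply]
  refine le_antisymm (fun f hf => ?_) (iSup₂_le fun y hy f hf m hm => ?_)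
  · rw [f.as_sum]
    refine sum_mem fun m hm => Submodule.mem_iSup_of_mem (Finsupp.weight w m) <|
      Submodule.mem_iSup_of_mem ?_ (isWeightedHomogeneous_monomial w m _ rfl)
    rw [← weight_comp, hf (mem_support_iff.1 hm)]
  · rw [weight_comp, hf hm, hy]

end Coarsening

section VeroneseGrading

variable {ι : Type} {p : ι → ℕ} {c0 c1 : ι → ℂ}

variable (p c0 c1) in
/-- The image in `S` of one of the variables `x_i` and `t_0, t_1`. -/
abbrev coord (j : ι ⊕ Fin 2) : SAlg ι p c0 c1 :=
  Ideal.Quotient.mk _ (X j)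

lemma coord_inl_pow (i : ι) :
    coord p c0 c1 (.inl i) ^ p i =
      algebraMap ℂ _ (c0 i) * coord p c0 c1 (.inr 0) +
        algebraMap ℂ _ (c1 i) * coord p c0 c1 (.inr 1) :=
  (map_pow _ _ _).symm.trans (Ideal.Quotient.eq.2 (Ideal.subset_span ⟨i, rfl⟩))

variable [DecidableEq ι] {Q : Type*} [AddCommGroup Q]

lemma smul_egen (i : ι) : p i • egen p i = cgen p := by
  refine eq_of_sub_eq_zero ((QuotientAddGroup.eq_zero_iff _).2 ?_)
  exact AddSubgroup.subset_closure ⟨i, by rw [natCast_zsmul]⟩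

/-- The degrees of the variables `x_i` and `t_0, t_1`. -/
def varDegree (p : ι → ℕ) : ι ⊕ Fin 2 → LGroup ι p :=
  Sum.elim (egen p) fun _ => cgen p

lemma polyCompA_eq_weightedHomogeneousSubmodule [Fintype ι] (y : LGroup ι p) :
    polyCompA p y = weightedHomogeneousSubmodule ℂ (varDegree p) y := by
  have weight_eq (m : (ι ⊕ Fin 2) →₀ ℕ) : Finsupp.weight (varDegree p) m = wtA p m := by
    simp [Finsupp.weight_apply, Finsupp.sum_fintype, wtA, varDegree, add_smul]
  ext f
  refine forall_congr' fun m => ?_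
  rw [weight_eq]

attribute [local instance] weightedGradedAlgebra

variable (c0 c1) in
/-- The components of `S` for the grading obtained from the `L`-grading along `q : L → Q`. -/
abbrev coarseComp (q : LGroup ι p →+ Q) : Q → Submodule ℂ (SAlg ι p c0 c1) :=
  quotientGrading (weightedHomogeneousSubmodule ℂ (q ∘ varDegree p)) (SIdl ι p c0 c1)

lemma coord_mem_coarseComp (q : LGroup ι p →+ Q) (j : ι ⊕ Fin 2) :
    coord p c0 c1 j ∈ coarseComp c0 c1 q (q (varDegree p j)) :=
  mk_mem_quotientGrading (isWeightedHomogeneous_X _ _ _)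

lemma SIdl_isHomogeneous [DecidableEq Q] (q : LGroup ι p →+ Q) :
    (SIdl ι p c0 c1).IsHomogeneous (weightedHomogeneousSubmodule ℂ (q ∘ varDegree p)) := by
  refine Ideal.homogeneous_span _ _ ?_
  rintro _ ⟨i, rfl⟩
  have mem_X (j : ι ⊕ Fin 2) : X j ∈ weightedHomogeneousSubmodule ℂ (q ∘ varDegree p) _ :=
    isWeightedHomogeneous_X ℂ _ j
  have mem_form (j : Fin 2) (t : ℂ) :
      C t * X (.inr j) ∈ weightedHomogeneousSubmodule ℂ (q ∘ varDegree p) (q (cgen p)) :=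
    (C_mul' (R := ℂ) (σ := ι ⊕ Fin 2)).symm ▸ Submodule.smul_mem _ t (mem_X (.inr j))
  have pow_mem := SetLike.pow_mem_graded (p i) (mem_X (.inl i))
  have : p i • q (varDegree p (.inl i)) = q (cgen p) := by
    rw [← map_nsmul]; exact congrArg q (smul_egen i)
  exact ⟨q (cgen p), sub_mem (this ▸ pow_mem) (add_mem (mem_form 0 _) (mem_form 1 _))⟩

instance coarseComp.gradedAlgebra [DecidableEq Q] (q : LGroup ι p →+ Q) :
    GradedAlgebra (coarseComp c0 c1 q) :=
  quotientGradedAlgebra (SIdl_isHomogeneous q)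

variable [Fintype ι]

lemma SCompA_eq_coarseComp : SCompA p c0 c1 = coarseComp c0 c1 (.id (LGroup ι p)) := by
  ext1 y
  rw [SCompA, polyCompA_eq_weightedHomogeneousSubmodule]
  rfl

lemma coarseComp_eq_iSup (q : LGroup ι p →+ Q) (z : Q) :
    coarseComp c0 c1 q z = ⨆ (y : LGroup ι p) (_ : q y = z), SCompA p c0 c1 y := by
  simp only [coarseComp, quotientGrading, weightedHomogeneousSubmodule_comp, Submodule.map_iSup,
    SCompA, polyCompA_eq_weightedHomogeneousSubmodule]

lemma SShiftA_eq_coarseComp (x y : LGroup ι p) :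
    SShiftA p c0 c1 y x =
      coarseComp c0 c1 (QuotientAddGroup.mk' (.zmultiples x)) (QuotientAddGroup.mk' _ y) := by
  rw [coarseComp_eq_iSup]
  refine le_antisymm (iSup_le fun m => le_iSup₂_of_le (y + m • x) ?_ le_rfl)
    (iSup₂_le fun z hz => ?_)
  · simp
  · obtain ⟨m, rfl⟩ : ∃ m : ℤ, y + m • x = z := by
      obtain ⟨m, hm⟩ := QuotientAddGroup.eq.1 hz.symm
      exact ⟨m, (congrArg (y + ·) hm).trans (add_neg_cancel_left y z)⟩
    exact le_iSup (fun m : ℤ => SCompA p c0 c1 (y + m • x)) m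

lemma SVerA_eq_coarseComp (x : LGroup ι p) :
    SVerA p c0 c1 x = coarseComp c0 c1 (QuotientAddGroup.mk' (.zmultiples x))
      (0 : LGroup ι p ⧸ AddSubgroup.zmultiples x) := by
  rw [← map_zero (QuotientAddGroup.mk' _), ← SShiftA_eq_coarseComp]
  simp only [SVerA, SShiftA, zero_add]

end VeroneseGrading

section Expand

variable {B κ : Type*} [CommRing B] {K : ℕ}

lemma ker_eval₂Hom_expand :
    RingHom.ker (eval₂Hom (expand K : MvPolynomial κ B →ₐ[B] _).toRingHom X) =
      Ideal.span (Set.range fun k => X k ^ K - MvPolynomial.C (X k)) := by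
  set I := Ideal.span (Set.range fun k : κ => (X k : MvPolynomial κ (MvPolynomial κ B)) ^ K -
    MvPolynomial.C (X k))
  refine le_antisymm (fun P hP => ?_) (Ideal.span_le.2 ?_)
  · have mk_X_pow (k : κ) : Ideal.Quotient.mk I (X k) ^ K = Ideal.Quotient.mk I (C (X k)) :=
      (map_pow _ _ _).symm.trans (Ideal.Quotient.eq.2 (Ideal.subset_span ⟨k, rfl⟩))
    let ρ : MvPolynomial κ B →+* MvPolynomial κ (MvPolynomial κ B) ⧸ I :=
      eval₂Hom ((Ideal.Quotient.mk I).comp (C.comp C)) fun k => Ideal.Quotient.mk I (X k)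
    have : ρ.comp (eval₂Hom (expand K : MvPolynomial κ B →ₐ[B] _).toRingHom X) =
        Ideal.Quotient.mk I := by
      ext k <;> simp [ρ, mk_X_pow]
    rw [← Ideal.Quotient.eq_zero_iff_mem, ← this, RingHom.comp_apply, RingHom.mem_ker.1 hP,
      map_zero]
  · rintro _ ⟨k, rfl⟩
    simp

/-- The Frobenius system of monomials for `B[x_k]` over `B[x_k ^ K]`. -/
def FrobeniusSystem.ofExpand [Fintype κ] [DecidableEq κ] (hK : 0 < K) :
    FrobeniusSystem (expand K : MvPolynomial κ B →ₐ[B] _).toRingHom (κ → Fin K) :=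
  .ofPowers (x := X) (a := X) (fun _ => hK)
    (fun P => ⟨map C P, by
      suffices (eval₂Hom _ X).comp (map C) = RingHom.id (MvPolynomial κ B) from
        RingHom.congr_fun this P
      ext <;> simp⟩)
    ker_eval₂Hom_expand

end Expand

section VeroneseFrobenius

variable {ι : Type} {p : ι → ℕ} {c0 c1 : ι → ℂ}

variable (p c0 c1) in
/-- The inclusion of `ℂ[t_0, t_1]` into `S`. -/
def polyToS : MvPolynomial (Fin 2) ℂ →ₐ[ℂ] SAlg ι p c0 c1 :=
  aeval fun j => coord p c0 c1 (.inr j)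

lemma eval₂Hom_comp_sumAlgEquiv :
    (eval₂Hom (polyToS p c0 c1).toRingHom fun i => coord p c0 c1 (.inl i)).comp
      (sumAlgEquiv ℂ ι (Fin 2)).toRingEquiv.toRingHom = Ideal.Quotient.mk (SIdl ι p c0 c1) := by
  ext j
  · simp only [polyToS, AlgHom.toRingHom_eq_coe, RingEquiv.toRingHom_eq_coe,
      AlgEquiv.toRingEquiv_toRingHom, RingHom.coe_comp, coe_eval₂Hom, RingHom.coe_coe,
      Function.comp_apply, sumAlgEquiv_C_inl, eval₂_C, algHom_C]
    rfl
  · cases j <;> simp [polyToS]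

lemma ker_eval₂Hom_polyToS :
    RingHom.ker (eval₂Hom (polyToS p c0 c1).toRingHom fun i => coord p c0 c1 (.inl i)) =
      Ideal.span (Set.range fun i => X i ^ p i - C (C (c0 i) * X 0 + C (c1 i) * X 1)) := by
  have comap_ker :
      (RingHom.ker (eval₂Hom (polyToS p c0 c1).toRingHom fun i => coord p c0 c1 (.inl i))).comap
        (sumAlgEquiv ℂ ι (Fin 2)).toRingEquiv.toRingHom = SIdl ι p c0 c1 := by
    rw [RingHom.comap_ker, eval₂Hom_comp_sumAlgEquiv, Ideal.mk_ker]
  rw [← Ideal.map_comap_of_surjective (sumAlgEquiv ℂ ι (Fin 2)).toRingEquiv.toRingHom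
    (sumAlgEquiv ℂ ι (Fin 2)).surjective (RingHom.ker _), comap_ker, SIdl, Ideal.map_span]
  congr 1
  ext P
  simp [Set.mem_image, eq_comm]

variable [Fintype ι] [DecidableEq ι]

/-- The Frobenius system of monomials in the `x_i` for `S` over `ℂ[t_0, t_1]`. -/
def frobeniusSystemPolyToS (hp : ∀ i, 0 < p i) :
    FrobeniusSystem (polyToS p c0 c1).toRingHom (∀ i, Fin (p i)) :=
  .ofPowers (x := fun i => coord p c0 c1 (.inl i)) hp
    (fun s => by
      obtain ⟨P, rfl⟩ := Ideal.Quotient.mk_surjective s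
      exact ⟨_, RingHom.congr_fun eval₂Hom_comp_sumAlgEquiv P⟩)
    ker_eval₂Hom_polyToS

/-- The Frobenius system of monomials for `S` over `ℂ[t_0 ^ K, t_1 ^ K]`. -/
def frobeniusSystemPowers (hp : ∀ i, 0 < p i) {K : ℕ} (hK : 0 < K) :
    FrobeniusSystem ((polyToS p c0 c1).toRingHom.comp (expand K).toRingHom)
      ((Fin 2 → Fin K) × ∀ i, Fin (p i)) :=
  (frobeniusSystemPolyToS hp).comp (.ofExpand hK)

lemma frobeniusSystemPowers_basis (hp : ∀ i, 0 < p i) {K : ℕ} (hK : 0 < K) (r) :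
    (frobeniusSystemPowers (c0 := c0) (c1 := c1) hp hK).basis r =
      (∏ j, coord p c0 c1 (.inr j) ^ (r.1 j : ℕ)) * ∏ i, coord p c0 c1 (.inl i) ^ (r.2 i : ℕ) := by
  simp [frobeniusSystemPowers, frobeniusSystemPolyToS, FrobeniusSystem.comp,
    FrobeniusSystem.ofExpand, FrobeniusSystem.ofPowers, polyToS]

end VeroneseFrobenius

section GradedTorsion

open DirectSum

variable {k S Q : Type*} [CommRing k] [CommRing S] [Algebra k S] [AddCommGroup Q] [DecidableEq Q]
  {𝒢 : Q → Submodule k S} [GradedAlgebra 𝒢]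

variable (𝒢) in
/-- For a grading by a torsion group, the group of the degrees of the homogeneous elements lying
outside a prime ideal. -/
def degreesOutside (hQ : IsAddTorsion Q) (𝔮 : Ideal S) [𝔮.IsPrime] : AddSubgroup Q where
  carrier := {z | ∃ f ∈ 𝒢 z, f ∉ 𝔮}
  zero_mem' := ⟨1, SetLike.one_mem_graded 𝒢, 𝔮.one_notMem⟩
  add_mem' := by
    rintro z w ⟨f, hf, hf𝔮⟩ ⟨g, hg, hg𝔮⟩
    exact ⟨f * g, SetLike.mul_mem_graded hf hg,
      fun h => (Ideal.IsPrime.mem_or_mem ‹_› h).elim hf𝔮 hg𝔮⟩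
  neg_mem' := by
    rintro z ⟨f, hf, hf𝔮⟩
    obtain ⟨n, hn : n • z = -z⟩ := (hQ z).mem_multiples_iff_mem_zmultiples.2
      (neg_mem (AddSubgroup.mem_zmultiples z))
    exact ⟨f ^ n, hn ▸ SetLike.pow_mem_graded n hf,
      fun h => hf𝔮 (Ideal.IsPrime.mem_of_pow_mem ‹_› n h)⟩

lemma mem_of_mem_span_of_mem_degree_zero {M : Submodule k S} (hM : M ≤ 𝒢 0)
    (hmul : 𝒢 0 * M ≤ M) {f : S} (hf0 : f ∈ 𝒢 0) (hf : f ∈ Ideal.span (M : Set S)) : f ∈ M := by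
  obtain ⟨c, hcM, rfl⟩ := Submodule.mem_span_set.1 hf
  rw [← decompose_of_mem_same 𝒢 hf0, Finsupp.sum, decompose_sum, DFinsupp.finsetSum_apply,
    AddSubmonoidClass.coe_finsetSum]
  refine sum_mem fun m hm => ?_
  rw [smul_eq_mul, coe_decompose_mul_of_right_mem_zero 𝒢 (hM (hcM hm))]
  exact hmul (Submodule.mul_mem_mul (SetLike.coe_mem _) (hcM hm))

lemma mem_mul_of_mem_span {ω : Q} {f : S} (hf0 : f ∈ 𝒢 0)
    (hf : f ∈ Ideal.span (𝒢 ω * 𝒢 (-ω) : Submodule k S)) : f ∈ 𝒢 ω * 𝒢 (-ω) := by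
  have mul_le {z w v : Q} (h : z + w = v) : 𝒢 z * 𝒢 w ≤ 𝒢 v :=
    Submodule.mul_le.2 fun _ ha _ hb => h ▸ SetLike.mul_mem_graded ha hb
  refine mem_of_mem_span_of_mem_degree_zero (mul_le (add_neg_cancel ω)) ?_ hf0 hf
  rw [← mul_assoc]
  gcongr
  exact mul_le (zero_add ω)

lemma mem_radical_span_of_degreesOutside_eq_top (hQ : IsAddTorsion Q) {s : S}
    (hs : ∀ (𝔮 : Ideal S) [𝔮.IsPrime], s ∉ 𝔮 → degreesOutside 𝒢 hQ 𝔮 = ⊤) (ω : Q) :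
    s ∈ (Ideal.span (𝒢 ω * 𝒢 (-ω) : Submodule k S)).radical := by
  rw [Ideal.radical_eq_sInf, Ideal.mem_sInf]
  rintro 𝔮 ⟨hle, _⟩
  by_contra hs𝔮
  have exists_mem (z : Q) : ∃ f ∈ 𝒢 z, f ∉ 𝔮 :=
    (hs 𝔮 hs𝔮).ge (AddSubgroup.mem_top z)
  obtain ⟨f, hf, hf𝔮⟩ := exists_mem ω
  obtain ⟨g, hg, hg𝔮⟩ := exists_mem (-ω)
  have : f * g ∈ 𝔮 := hle (Ideal.subset_span (Submodule.mul_mem_mul hf hg))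
  exact (Ideal.IsPrime.mem_or_mem ‹_› this).elim hf𝔮 hg𝔮

end GradedTorsion

section WeightGroup

variable {ι : Type} [DecidableEq ι] {p : ι → ℕ}

lemma eq_top_of_egen_mem_of_cgen_mem [Finite ι] {T : AddSubgroup (LGroup ι p)}
    (he : ∀ i, egen p i ∈ T) (hc : cgen p ∈ T) : T = ⊤ := by
  refine eq_top_iff.2 fun z _ => ?_
  obtain ⟨v, rfl⟩ := QuotientAddGroup.mk_surjective z
  refine AddSubgroup.pi_mem_of_single_mem (H := T.comap (QuotientAddGroup.mk' _)) v fun o => ?_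
  have single_eq : (Pi.single o (v o) : Option ι → ℤ) = v o • Pi.single o 1 := by
    rw [← Pi.single_smul, smul_eq_mul, mul_one]
  rw [single_eq]
  refine zsmul_mem ?_ _
  cases o with
  | none => exact hc
  | some i => exact he i

variable [Fintype ι]

lemma prod_smul_mem_zmultiples_cgen (z : LGroup ι p) :
    (∏ i, p i) • z ∈ AddSubgroup.zmultiples (cgen p) := by
  suffices (AddSubgroup.zmultiples (cgen p)).comap (nsmulAddMonoidHom (∏ i, p i)) = ⊤ from
    this.ge (AddSubgroup.mem_top z)
  refine eq_top_of_egen_mem_of_cgen_mem (fun i => ?_)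
    (nsmul_mem (AddSubgroup.mem_zmultiples _) _)
  obtain ⟨d, hd⟩ := Finset.dvd_prod_of_mem p (Finset.mem_univ i)
  rw [AddSubgroup.mem_comap, nsmulAddMonoidHom_apply, hd, mul_nsmul, smul_egen]
  exact nsmul_mem (AddSubgroup.mem_zmultiples _) _

lemma isAddTorsion_quotient_zmultiples (hp : ∀ i, 0 < p i) {x : LGroup ι p}
    (hx : ¬IsOfFinAddOrder x) : IsAddTorsion (LGroup ι p ⧸ AddSubgroup.zmultiples x) := by
  intro z
  obtain ⟨z, rfl⟩ := QuotientAddGroup.mk_surjective z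
  obtain ⟨m, hm⟩ := prod_smul_mem_zmultiples_cgen x
  obtain ⟨k, hk⟩ := prod_smul_mem_zmultiples_cgen z
  simp only at hm hk
  have prod_ne : (∏ i, p i) ≠ 0 := (Finset.prod_pos fun i _ => hp i).ne'
  have m_ne : m ≠ 0 := by
    rintro rfl
    rw [zero_smul] at hm
    exact hx (isOfFinAddOrder_iff_nsmul_eq_zero.2 ⟨_, Nat.pos_of_ne_zero prod_ne, hm.symm⟩)
  refine (isOfFinAddOrder_iff_zsmul_eq_zero (G := LGroup ι p ⧸ AddSubgroup.zmultiples x)).2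
    ⟨m * (∏ i, p i : ℕ), mul_ne_zero m_ne (Nat.cast_ne_zero.2 prod_ne), ?_⟩
  have smul_z : (m * (∏ i, p i : ℕ)) • z = k • (∏ i, p i) • x := by
    rw [mul_zsmul, natCast_zsmul, ← hk, ← hm, ← mul_zsmul, ← mul_zsmul, mul_comm]
  rw [← QuotientAddGroup.mk_zsmul, QuotientAddGroup.eq_zero_iff, smul_z]
  exact zsmul_mem (nsmul_mem (AddSubgroup.mem_zmultiples x) _) k

/-- The degree map `L → ℚ`, with `e_i ↦ 1 / p_i` and `c ↦ 1`. -/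
def degree (hp : ∀ i, 0 < p i) : LGroup ι p →+ ℚ :=
  QuotientAddGroup.lift _
    (Fintype.linearCombination ℤ fun o : Option ι => o.elim (1 : ℚ) fun i => (p i : ℚ)⁻¹) <| by
    rw [LRel, AddSubgroup.closure_le]
    rintro _ ⟨i, rfl⟩
    have : (p i : ℚ) ≠ 0 := Nat.cast_ne_zero.2 (hp i).ne'
    rw [SetLike.mem_coe, AddMonoidHom.mem_ker, map_sub, map_zsmul]
    simp [Fintype.linearCombination_apply_single, this]

lemma degree_egen (hp : ∀ i, 0 < p i) (i : ι) : degree hp (egen p i) = (p i : ℚ)⁻¹ := by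
  simp [degree, egen, Fintype.linearCombination_apply_single]

lemma eq_zero_or_degree_pos_of_mem_Lplus (hp : ∀ i, 0 < p i) {x : LGroup ι p}
    (hx : x ∈ Lplus p) : x = 0 ∨ 0 < degree hp x := by
  induction hx using AddSubmonoid.closure_induction with
  | mem _ h =>
    obtain ⟨i, rfl⟩ := h
    exact .inr (by rw [degree_egen]; exact inv_pos.2 (Nat.cast_pos.2 (hp i)))
  | zero => exact .inl rfl
  | add u v _ _ hu hv =>
    rcases hu with rfl | hu
    · rwa [zero_add]
    rcases hv with rfl | hv
    · exact .inr (by rwa [add_zero])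
    · exact .inr (by rw [map_add]; exact add_pos hu hv)

lemma not_isOfFinAddOrder_of_mem_Lplus (hp : ∀ i, 0 < p i) {x : LGroup ι p} (hx0 : x ≠ 0)
    (hx : x ∈ Lplus p) : ¬IsOfFinAddOrder x := fun h =>
  ((eq_zero_or_degree_pos_of_mem_Lplus hp hx).resolve_left hx0).ne'
    ((isOfFinAddOrder_iff_eq_zero _).1 ((degree hp).isOfFinAddOrder h))

lemma egen_mem_of_forall_ne {T : AddSubgroup (LGroup ι p)} (hc : cgen p ∈ T) {a : ι → ℕ} {aZ : ℤ}
    (hx : (∑ l, a l • egen p l) + aZ • cgen p ∈ T) {i : ι} (hi : Nat.gcd (p i) (a i) = 1)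
    (hne : ∀ l ≠ i, egen p l ∈ T) : egen p i ∈ T := by
  have smul_mem : a i • egen p i ∈ T := by
    rw [← Finset.add_sum_erase _ _ (Finset.mem_univ i), add_assoc] at hx
    refine (T.add_mem_cancel_right (add_mem (sum_mem fun l hl => ?_) (zsmul_mem hc aZ))).1 hx
    exact nsmul_mem (hne l (Finset.ne_of_mem_erase hl)) _
  obtain ⟨u, v, huv⟩ := Nat.isCoprime_iff_coprime.2 hi
  rw [← one_zsmul (egen p i), ← huv, add_zsmul, mul_zsmul, mul_zsmul, natCast_zsmul,
    natCast_zsmul, smul_egen]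
  exact add_mem (zsmul_mem hc u) (zsmul_mem smul_mem v)

end WeightGroup

section RadicalArgument

variable {ι : Type} {p : ι → ℕ} {c0 c1 : ι → ℂ}

lemma coord_inr_mem_of_coord_inl_mem (hp : ∀ i, 0 < p i) {i l : ι}
    (hil : c0 i * c1 l ≠ c1 i * c0 l) {I : Ideal (SAlg ι p c0 c1)} (hi : coord p c0 c1 (.inl i) ∈ I)
    (hl : coord p c0 c1 (.inl l) ∈ I) (j : Fin 2) : coord p c0 c1 (.inr j) ∈ I := by
  have form_mem {i : ι} (hi : coord p c0 c1 (.inl i) ∈ I) :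
      algebraMap ℂ _ (c0 i) * coord p c0 c1 (.inr 0) +
        algebraMap ℂ _ (c1 i) * coord p c0 c1 (.inr 1) ∈ I :=
    coord_inl_pow i ▸ I.pow_mem_of_mem hi _ (hp i)
  have det_isUnit : IsUnit (algebraMap ℂ (SAlg ι p c0 c1) (c0 i * c1 l - c1 i * c0 l)) :=
    (isUnit_iff_ne_zero.2 (sub_ne_zero.2 hil)).map _
  refine (I.unit_mul_mem_iff_mem det_isUnit).1 ?_
  rw [map_sub, map_mul, map_mul]
  match j with
  | 0 =>
    convert sub_mem (I.mul_mem_left (algebraMap ℂ _ (c1 l)) (form_mem hi))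
      (I.mul_mem_left (algebraMap ℂ _ (c1 i)) (form_mem hl)) using 1
    ring
  | 1 =>
    convert sub_mem (I.mul_mem_left (algebraMap ℂ _ (c0 i)) (form_mem hl))
      (I.mul_mem_left (algebraMap ℂ _ (c0 l)) (form_mem hi)) using 1
    ring

variable [Fintype ι] [DecidableEq ι] {Q : Type*} [AddCommGroup Q]
  {q : LGroup ι p →+ Q}

lemma degreesOutside_coarseComp_eq_top [DecidableEq Q] (hp : ∀ i, 0 < p i)
    (hdist : ∀ i l, i ≠ l → c0 i * c1 l ≠ c1 i * c0 l) (hQ : IsAddTorsion Q)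
    (hq : Function.Surjective q) {a : ι → ℕ} {aZ : ℤ}
    (hqx : q ((∑ i, a i • egen p i) + aZ • cgen p) = 0) (hgcd : ∀ i, Nat.gcd (p i) (a i) = 1)
    {𝔮 : Ideal (SAlg ι p c0 c1)} [𝔮.IsPrime] {j : Fin 2} (hj : coord p c0 c1 (.inr j) ∉ 𝔮) :
    degreesOutside (coarseComp c0 c1 q) hQ 𝔮 = ⊤ := by
  set T := (degreesOutside (coarseComp c0 c1 q) hQ 𝔮).comap q with hT
  suffices T = ⊤ from AddSubgroup.comap_injective hq (this.trans (AddSubgroup.comap_top q).symm)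
  have cgen_mem : cgen p ∈ T := ⟨_, coord_mem_coarseComp q (.inr j), hj⟩
  refine eq_top_of_egen_mem_of_cgen_mem (fun i => ?_) cgen_mem
  by_cases hi : coord p c0 c1 (.inl i) ∈ 𝔮
  · have mem_T : (∑ i, a i • egen p i) + aZ • cgen p ∈ T := by
      rw [hT, AddSubgroup.mem_comap, hqx]
      exact zero_mem _
    exact egen_mem_of_forall_ne cgen_mem mem_T (hgcd i) fun l hl =>
      ⟨_, coord_mem_coarseComp q (.inl l),
        fun h => hj (coord_inr_mem_of_coord_inl_mem hp (hdist l i hl) h hi j)⟩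
  · exact ⟨_, coord_mem_coarseComp q (.inl i), hi⟩

lemma exists_coord_inr_pow_mem_mul (hp : ∀ i, 0 < p i)
    (hdist : ∀ i l, i ≠ l → c0 i * c1 l ≠ c1 i * c0 l) (hQ : IsAddTorsion Q)
    (hq : Function.Surjective q) {a : ι → ℕ} {aZ : ℤ}
    (hqx : q ((∑ i, a i • egen p i) + aZ • cgen p) = 0) (hgcd : ∀ i, Nat.gcd (p i) (a i) = 1)
    (ω : Q) :
    ∃ K : ℕ, 0 < K ∧ K • q (cgen p) = 0 ∧
      ∀ j, coord p c0 c1 (.inr j) ^ K ∈ coarseComp c0 c1 q ω * coarseComp c0 c1 q (-ω) := by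
  classical
  have mem_radical (j : Fin 2) := mem_radical_span_of_degreesOutside_eq_top hQ
    (fun 𝔮 _ hj => degreesOutside_coarseComp_eq_top hp hdist hQ hq hqx hgcd (j := j) hj) ω
  choose N hN using mem_radical
  set K := addOrderOf (q (cgen p)) * (N 0 + N 1 + 1) with hK
  have K_smul : K • q (cgen p) = 0 := by
    rw [hK, mul_nsmul, addOrderOf_nsmul_eq_zero, nsmul_zero]
  have order_pos : 0 < addOrderOf (q (cgen p)) := (hQ _).addOrderOf_pos
  have N_le (j : Fin 2) : N j ≤ K := by
    have : N j ≤ N 0 + N 1 + 1 := by match j with | 0 | 1 => lia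
    exact this.trans (Nat.le_mul_of_pos_left _ order_pos)
  refine ⟨K, Nat.mul_pos order_pos (Nat.succ_pos _), K_smul, fun j => mem_mul_of_mem_span ?_
    (Ideal.pow_mem_of_pow_mem _ (hN j) (N_le j))⟩
  exact K_smul ▸ SetLike.pow_mem_graded K (coord_mem_coarseComp q (.inr j))

end RadicalArgument

section CanonicalDegree

variable {ι : Type} [DecidableEq ι] {p : ι → ℕ} {c0 c1 : ι → ℂ} {Q : Type*} [AddCommGroup Q]
  {q : LGroup ι p →+ Q} {K : ℕ}

lemma polyToS_expand_mem (hKc : K • q (cgen p) = 0) (P : MvPolynomial (Fin 2) ℂ) :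
    polyToS p c0 c1 (expand K P) ∈ coarseComp c0 c1 q 0 := by
  classical
  have comp_eq : (polyToS p c0 c1).comp (expand K) =
      aeval fun j => coord p c0 c1 (.inr j) ^ K := by
    ext j
    simp [polyToS]
  suffices ((polyToS p c0 c1).comp (expand K)).range ≤
      SetLike.GradeZero.subalgebra (coarseComp c0 c1 q) from this ⟨P, rfl⟩
  rw [comp_eq, aeval_range, Algebra.adjoin_le_iff]
  rintro _ ⟨j, rfl⟩
  change _ ∈ coarseComp c0 c1 q 0
  exact hKc ▸ SetLike.pow_mem_graded K (coord_mem_coarseComp q (.inr j))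

variable [Fintype ι]

variable (p) in
/-- The degree `ω = (n - 2) c - (e_1 + ⋯ + e_n)` of the canonical module of `S`. -/
def canonicalDegree : LGroup ι p :=
  ((Fintype.card ι : ℤ) - 2) • cgen p - ∑ i, egen p i

lemma sum_nsmul_pred_eq_canonicalDegree (hp : ∀ i, 0 < p i) (hK : 0 < K)
    (hKc : K • q (cgen p) = 0) :
    ∑ _j : Fin 2, (K - 1) • q (cgen p) + ∑ i, (p i - 1) • q (egen p i) =
      q (canonicalDegree p) := by
  have pred_K_smul : (K - 1) • q (cgen p) = -q (cgen p) := by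
    rw [sub_nsmul _ hK, hKc, one_nsmul, zero_add]
  have pred_p_smul (i : ι) : (p i - 1) • q (egen p i) = q (cgen p) - q (egen p i) := by
    rw [sub_nsmul _ (hp i), one_nsmul, ← map_nsmul, smul_egen, sub_eq_add_neg]
  have map_canonicalDegree : q (canonicalDegree p) =
      ((Fintype.card ι : ℤ) - 2) • q (cgen p) - ∑ i, q (egen p i) := by
    rw [canonicalDegree, map_sub, map_zsmul, map_sum]
  simp only [pred_K_smul, pred_p_smul, map_canonicalDegree, Finset.sum_sub_distrib,
    Finset.sum_const, Finset.card_univ, Fintype.card_fin, sub_zsmul, natCast_zsmul]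
  abel

lemma frobeniusSystemPowers_basis_mem (hp : ∀ i, 0 < p i) (hK : 0 < K) (r) :
    (frobeniusSystemPowers (c0 := c0) (c1 := c1) hp hK).basis r ∈ coarseComp c0 c1 q
      (∑ j, (r.1 j : ℕ) • q (cgen p) + ∑ i, (r.2 i : ℕ) • q (egen p i)) := by
  classical
  rw [frobeniusSystemPowers_basis]
  exact SetLike.mul_mem_graded
    (SetLike.prod_pow_mem_graded _ _ _ _ fun j _ => coord_mem_coarseComp q (.inr j))
    (SetLike.prod_pow_mem_graded _ _ _ _ fun i _ => coord_mem_coarseComp q (.inl i))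

end CanonicalDegree

section RegularSequence

open RingTheory.Sequence

lemma isWeaklyRegular_pair_of_prime {A : Type*} [CommRing A] [IsDomain A] {u v : A} (hu : Prime u)
    (huv : ¬u ∣ v) : IsWeaklyRegular A [u, v] := by
  refine .cons (IsRegular.of_ne_zero hu.ne_zero).1 ((isWeaklyRegular_singleton_iff _ _).2 ?_)
  refine (isSMulRegular_quotient_iff_mem_of_smul_mem _ _).2 fun b hb => ?_
  obtain ⟨c, -, hc⟩ := hb
  obtain ⟨d, rfl⟩ := (hu.dvd_or_dvd ⟨c, hc.symm⟩).resolve_left huv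
  exact Submodule.smul_mem_pointwise_smul d u ⊤ trivial

lemma ker_constantCoeff {σ R : Type*} [CommRing R] :
    RingHom.ker (constantCoeff (σ := σ) (R := R)) = idealOfVars σ R := by
  ext P
  rw [← pow_one (idealOfVars σ R), mem_pow_idealOfVars_iff']
  simp [constantCoeff_eq, Finsupp.degree_eq_zero_iff]

variable {k : Type*} [Field k]

lemma isWeaklyRegular_X_zero_X_one :
    IsWeaklyRegular (MvPolynomial (Fin 2) k) [(X 0 : MvPolynomial (Fin 2) k), X 1] :=
  isWeaklyRegular_pair_of_prime X_prime (by simp [X_dvd_X])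

lemma isMaximal_span_X_zero_X_one :
    (Ideal.span {(X 0 : MvPolynomial (Fin 2) k), X 1}).IsMaximal := by
  have : Ideal.span {(X 0 : MvPolynomial (Fin 2) k), X 1} = RingHom.ker constantCoeff := by
    rw [ker_constantCoeff, idealOfVars]
    congr 1
    ext P
    simp [Fin.exists_fin_two, eq_comm]
  rw [this]
  exact RingHom.ker_isMaximal_of_surjective _ fun t => ⟨C t, constantCoeff_C _ t⟩

end RegularSequence

section ComponentEquation

lemma iSup_eq_iSup_iff_of_iSupIndep {ι α : Type*} [CompleteLattice α] [IsModularLattice α]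
    {f g : ι → α} (hg : iSupIndep g) (hle : f ≤ g) : ⨆ i, f i = ⨆ i, g i ↔ f = g := by
  refine ⟨fun h => le_antisymm hle fun i => ?_, fun h => h ▸ rfl⟩
  have rest_disjoint : (⨆ (j) (_ : j ≠ i), f j) ⊓ g i = ⊥ :=
    ((hg i).symm.mono_left (iSup₂_mono fun j _ => hle j)).eq_bot
  calc g i ≤ (f i ⊔ ⨆ (j) (_ : j ≠ i), f j) ⊓ g i :=
        le_inf (by rw [← iSup_split_single f i, h]; exact le_iSup g i) le_rfl
    _ = f i := by rw [sup_inf_assoc_of_le _ (hle i), rest_disjoint, sup_bot_eq]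

variable {k S L : Type*} [CommRing k] [CommRing S] [Algebra k S] [AddCommGroup L]
  (𝒜 : L → Submodule k S)

lemma iSup_add_zsmul_mul_iSup_add_zsmul (u v x : L) :
    (⨆ m : ℤ, 𝒜 (u + m • x)) * ⨆ m : ℤ, 𝒜 (v + m • x) =
      ⨆ ℓ : ℤ, ⨆ m : ℤ, 𝒜 (u + m • x) * 𝒜 (v + (ℓ - m) • x) := by
  simp only [Submodule.iSup_mul, Submodule.mul_iSup]
  rw [iSup_comm (ι := ℤ)]
  conv_rhs => rw [iSup_comm]
  exact iSup_congr fun m => ((Equiv.subRight m).iSup_comp (g := fun j => _ * 𝒜 (v + j • x))).symm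

variable [DecidableEq L] [GradedAlgebra 𝒜]

lemma iSup_add_zsmul_mul_eq_iff {x : L} (hx : ¬IsOfFinAddOrder x) (u v : L) :
    ((⨆ m : ℤ, 𝒜 (u + m • x)) * ⨆ m : ℤ, 𝒜 (v + m • x)) = ⨆ ℓ : ℤ, 𝒜 (v + u + ℓ • x) ↔
      ∀ ℓ : ℤ, 𝒜 (v + u + ℓ • x) = ⨆ m : ℤ, 𝒜 (u + m • x) * 𝒜 (v + (ℓ - m) • x) := by
  have mul_le (ℓ : ℤ) : ⨆ m : ℤ, 𝒜 (u + m • x) * 𝒜 (v + (ℓ - m) • x) ≤ 𝒜 (v + u + ℓ • x) := by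
    refine iSup_le fun m => Submodule.mul_le.2 fun f hf g hg => ?_
    convert SetLike.mul_mem_graded hf hg using 2
    rw [sub_zsmul]
    abel
  have indep : iSupIndep fun ℓ : ℤ => 𝒜 (v + u + ℓ • x) :=
    (DirectSum.Decomposition.isInternal 𝒜).submodule_iSupIndep.comp
      ((add_right_injective _).comp (injective_zsmul_iff_not_isOfFinAddOrder.2 hx))
  rw [iSup_add_zsmul_mul_iSup_add_zsmul, iSup_eq_iSup_iff_of_iSupIndep indep mul_le, eq_comm,
    funext_iff]

end ComponentEquation

open CategoryTheory in
theorem special_iff_component_equation_general {ι : Type} [Fintype ι] [DecidableEq ι] {p : ι → ℕ}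
    (hp : ∀ i, 0 < p i) {c0 c1 : ι → ℂ} (hdist : ∀ i j, i ≠ j → c0 i * c1 j ≠ c1 i * c0 j)
    {x : LGroup ι p} (hx : ¬IsOfFinAddOrder x) {a : ι → ℕ} {aZ : ℤ}
    (hxnf : x = (∑ i, a i • egen p i) + aZ • cgen p) (hgcd : ∀ i, Nat.gcd (p i) (a i) = 1)
    (y : LGroup ι p) {R : Subalgebra ℂ (SAlg ι p c0 c1)}
    (hR : Subalgebra.toSubmodule R = SVerA p c0 c1 x) {M : Submodule R (SAlg ι p c0 c1)}
    (hM : (M : Set (SAlg ι p c0 c1)) = SShiftA p c0 c1 y x) :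
    Subsingleton (((Ext R (ModuleCat R) 1).obj (.op (.of R M))).obj (.of R R)) ↔
      ∀ ℓ : ℤ, SCompA p c0 c1 (y + canonicalDegree p + ℓ • x) =
        ⨆ m : ℤ, SCompA p c0 c1 (canonicalDegree p + m • x) *
          SCompA p c0 c1 (y + (ℓ - m) • x) := by
  classical
  set q := QuotientAddGroup.mk' (AddSubgroup.zmultiples x)
  have hqx : q x = 0 := (QuotientAddGroup.eq_zero_iff x).2 (AddSubgroup.mem_zmultiples x)
  obtain ⟨K, hK, hKc, power_mem⟩ := exists_coord_inr_pow_mem_mul (c0 := c0) (c1 := c1) hp hdist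
    (isAddTorsion_quotient_zmultiples hp hx) (QuotientAddGroup.mk'_surjective _)
    (by rw [← hxnf, hqx]) hgcd (q (canonicalDegree p))
  rw [SVerA_eq_coarseComp] at hR
  have overDegreeZero_eq : overDegreeZero hR (q y) = M :=
    SetLike.coe_injective (by rw [hM, SShiftA_eq_coarseComp]; rfl)
  have := isMaximal_span_X_zero_X_one (k := ℂ)
  have polyToS_X (j) : (polyToS p c0 c1).toRingHom.comp (expand K).toRingHom (X j) =
      coord p c0 c1 (.inr j) ^ K := by
    simp [polyToS]
  rw [← overDegreeZero_eq, FrobeniusSystem.subsingleton_ext_one_overDegreeZero_iff hR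
    (polyToS_expand_mem hKc) (frobeniusSystemPowers hp hK) (frobeniusSystemPowers_basis_mem hp hK)
    (sum_nsmul_pred_eq_canonicalDegree hp hK hKc) isWeaklyRegular_X_zero_X_one
    (polyToS_X 0 ▸ power_mem 0) (polyToS_X 1 ▸ power_mem 1), mul_comm, ← map_add,
    ← SShiftA_eq_coarseComp, ← SShiftA_eq_coarseComp, ← SShiftA_eq_coarseComp]
  simp only [SShiftA, SCompA_eq_coarseComp]
  exact iSup_add_zsmul_mul_eq_iff _ hx _ _

open CategoryTheory in
/-- Criterion for `S(y)^x` to be a special CM `R = S^x`-module: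
`Ext¹_R(S(y)^x, R) = 0` iff `S_{y+ω+ℓx} = ∑ₘ S_{ω+mx}·S_{y+(ℓ−m)x}` for all `ℓ ∈ ℤ`. -/
theorem special_iff_component_equation (n : ℕ) (hn : 1 ≤ n) (p : Fin n → ℕ)
    (hp : ∀ i, 2 ≤ p i)
    (c0 c1 : Fin n → ℂ) (hnz : ∀ i, (c0 i, c1 i) ≠ (0, 0))
    (hdist : ∀ i j : Fin n, i ≠ j → c0 i * c1 j ≠ c1 i * c0 j)
    (x : LGroup (Fin n) p) (hx0 : x ≠ 0) (hxp : x ∈ Lplus p)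
    (a : Fin n → ℕ) (ha : ∀ i, a i < p i) (aZ : ℤ)
    (hxnf : x = (∑ i, a i • egen p i) + aZ • cgen p)
    (hgcd : ∀ i, Nat.gcd (p i) (a i) = 1)
    (y : LGroup (Fin n) p)
    (R : Subalgebra ℂ (SAlg (Fin n) p c0 c1))
    (hR : Subalgebra.toSubmodule R = SVerA p c0 c1 x)
    (M : Submodule ↥R (SAlg (Fin n) p c0 c1))
    (hM : (M : Set (SAlg (Fin n) p c0 c1)) = ↑(SShiftA p c0 c1 y x)) :
    Subsingleton (((Ext ↥R (ModuleCat ↥R) 1).obj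
        (Opposite.op (ModuleCat.of ↥R ↥M))).obj (ModuleCat.of ↥R ↥R)) ↔
      ∀ ℓ : ℤ,
        SCompA p c0 c1 (y + (((n : ℤ) - 2) • cgen p - ∑ i, egen p i) + ℓ • x) =
          ⨆ m : ℤ, SCompA p c0 c1 ((((n : ℤ) - 2) • cgen p - ∑ i, egen p i) + m • x) *
            SCompA p c0 c1 (y + (ℓ - m) • x) := by
  have hp_pos (i) : 0 < p i := two_pos.trans_le (hp i)
  simpa only [canonicalDegree, Fintype.card_fin] using special_iff_component_equation_general hp_pos
    hdist (not_isOfFinAddOrder_of_mem_Lplus hp_pos hx0 hxp) hxnf hgcd y hR hM
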